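/- arXiv:1507.02035 — 2 statements merged into one kernel-verified Lean document; each statement's English description precedes it below -/
import Mathlib

section
/- Let ρ ∈ ℕ, δ ∈ [0,1/2], β > 0, and let a be an h-dependent symbol in the class S_{δ,β}(⟨(x+p'(ξ))/√h⟩^{−1}), where p(ξ) = √(1+ξ²). Then there exist C > 0 and σ > 0 depending linearly on β such that for every h ∈ (0,1] and every Schwartz function v, ‖Op_h^w(a)v‖_{W^{ρ,∞}_h} ≤ C h^{−1/4−σ} ‖v‖_{L²(ℝ)}. -/
noncomputable section

open MeasureTheory Filter

/-- The Fourier transform on `ℝ`. -/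
def FT (f : ℝ → ℂ) : ℝ → ℂ := FourierTransform.fourier f
/-- The inverse Fourier transform on `ℝ`. -/
def FTinv (f : ℝ → ℂ) : ℝ → ℂ := FourierTransformInv.fourierInv f

/-- The `L²(ℝ)` norm. -/
def L2Norm (f : ℝ → ℂ) : ℝ := (∫ x : ℝ, ‖f x‖ ^ 2) ^ ((1:ℝ)/2)
/-- The `L^∞(ℝ)` norm (as a supremum). -/
def LinfNorm (f : ℝ → ℂ) : ℝ := ⨆ x : ℝ, ‖f x‖
/-- The semiclassical Sobolev norm `‖v‖_{H^s_h}`. -/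
def HhNorm (h s : ℝ) (f : ℝ → ℂ) : ℝ :=
  (∫ ξ : ℝ, (1 + (h*ξ)^2) ^ s * ‖FT f ξ‖ ^ 2) ^ ((1:ℝ)/2)
/-- Fourier multiplier with multiplier `m` (at frequency `ξ`, factor `m ξ`). -/
def FMul (m : ℝ → ℂ) (f : ℝ → ℂ) : ℝ → ℂ := FTinv (fun ξ => m ξ * FT f ξ)
/-- The semiclassical Japanese bracket `⟨hD⟩^r`, Fourier multiplier `(1+|hξ|²)^{r/2}`. -/
def JBh (h r : ℝ) (f : ℝ → ℂ) : ℝ → ℂ :=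
  FMul (fun ξ => (((1 + (h*ξ)^2) ^ (r/2) : ℝ) : ℂ)) f
/-- Partial derivative in time of a function of `(t,x)`. -/
def pdt (u : ℝ → ℝ → ℝ) : ℝ → ℝ → ℝ := fun t x => deriv (fun s => u s x) t
/-- Partial derivative in space of a function of `(t,x)`. -/
def pdx (u : ℝ → ℝ → ℝ) : ℝ → ℝ → ℝ := fun t x => deriv (fun y => u t y) x
/-- The `L²(ℝ)` norm of a real valued function. -/
def L2R (f : ℝ → ℝ) : ℝ := (∫ x : ℝ, (f x)^2) ^ ((1:ℝ)/2)
/-- The Sobolev `H^s(ℝ)` norm of a real valued function. -/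
def HsR (s : ℝ) (f : ℝ → ℝ) : ℝ := HhNorm 1 s (fun x => ((f x : ℝ) : ℂ))
/-- The norm `‖ψ(t,·)‖_{W^{t,ρ,∞}} = Σ_{i=0}² ‖⟨D_x⟩^{ρ−i} D_t^i ψ(t,·)‖_{L^∞}`. -/
def WtNorm (ρ : ℝ) (u : ℝ → ℝ → ℝ) (t : ℝ) : ℝ :=
  ∑ i ∈ Finset.range 3, LinfNorm (JBh 1 (ρ - (i:ℝ)) (fun x => (((pdt^[i] u) t x : ℝ) : ℂ)))
/-- The Klainerman vector field `Z = t∂_x + x∂_t` applied to `u`. -/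
def Zf (u : ℝ → ℝ → ℝ) : ℝ → ℝ → ℝ := fun t x => t * pdx u t x + x * pdt u t x

/-- `ω₀(x) = 1/√(1-x²)`. -/
def ω₀ (x : ℝ) : ℝ := 1 / Real.sqrt (1 - x^2)
/-- `ω₁(x) = -x/√(1-x²)`. -/
def ω₁ (x : ℝ) : ℝ := -x / Real.sqrt (1 - x^2)
/-- `φ(x) = √(1-x²)`. -/
def φfn (x : ℝ) : ℝ := Real.sqrt (1 - x^2)
/-- Partial derivative in `x` of a symbol `a(x,ξ)`. -/
def pd1 (f : ℝ → ℝ → ℂ) : ℝ → ℝ → ℂ := fun x ξ => deriv (fun x' => f x' ξ) x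
/-- Partial derivative in `ξ` of a symbol `a(x,ξ)`. -/
def pd2 (f : ℝ → ℝ → ℂ) : ℝ → ℝ → ℂ := fun x ξ => deriv (fun ξ' => f x ξ') ξ

/-- The Japanese bracket `⟨z⟩ = √(1+z²)`. -/
def jap (z : ℝ) : ℝ := Real.sqrt (1 + z^2)

/-- A function of `(x,ξ)` is (the restriction of) a Schwartz function on `ℝ²`. -/
def IsSchwartz2 (f : ℝ → ℝ → ℂ) : Prop :=
  ∃ g : SchwartzMap (ℝ × ℝ) ℂ, ∀ x ξ : ℝ, g (x, ξ) = f x ξ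

/-- An `h`-dependent symbol family is Schwartz in `(x,ξ)` for each `h`. -/
def SchwartzFamily (a : ℝ → ℝ → ℝ → ℂ) : Prop :=
  ∀ h ∈ Set.Ioc (0:ℝ) 1, IsSchwartz2 (a h)

/-- The symbol estimates of the class `S_{δ,β}(M)`, with explicit constants
`Cc α₁ α₂ N` : for all derivatives,
`|∂_x^{α₁}∂_ξ^{α₂}a| ≤ C M(x,ξ) h^{−δ(α₁+α₂)} (1+βh^β|ξ|)^{−N}`.
The weight `M` is allowed to depend on `h`. -/
def SymBound (δ β : ℝ) (M : ℝ → ℝ → ℝ → ℝ) (Cc : ℕ → ℕ → ℕ → ℝ)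
    (a : ℝ → ℝ → ℝ → ℂ) : Prop :=
  ∀ α₁ α₂ N : ℕ, ∀ h ∈ Set.Ioc (0:ℝ) 1, ∀ x ξ : ℝ,
    ‖(pd1^[α₁] (pd2^[α₂] (a h))) x ξ‖ ≤
      Cc α₁ α₂ N * M h x ξ * h ^ (-(δ * ((α₁ : ℝ) + (α₂ : ℝ)))) *
        (1 + β * h ^ β * |ξ|) ^ (-(N : ℝ))

/-- The symbol class `S_{δ,β}(M)` (for some constants). -/
def SymClass (δ β : ℝ) (M : ℝ → ℝ → ℝ → ℝ) (a : ℝ → ℝ → ℝ → ℂ) : Prop :=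
  ∃ Cc : ℕ → ℕ → ℕ → ℝ, SymBound δ β M Cc a

/-- An order function on `ℝ×ℝ`. -/
def IsOrderFn (M : ℝ → ℝ → ℝ) : Prop :=
  ContDiff ℝ (⊤ : ℕ∞) (fun p : ℝ × ℝ => M p.1 p.2) ∧ (∀ x ξ, 0 < M x ξ) ∧
  ∃ N₀ : ℕ, ∃ C : ℝ, 0 < C ∧ ∀ x ξ y η : ℝ,
    M y η ≤ C * jap (x - y) ^ N₀ * jap (ξ - η) ^ N₀ * M x ξ

/-- `p(ξ) = √(1+ξ²)`. -/
def pfun (ξ : ℝ) : ℝ := Real.sqrt (1 + ξ^2)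
/-- `p'(ξ) = ξ/√(1+ξ²)`. -/
def pprime (ξ : ℝ) : ℝ := ξ / Real.sqrt (1 + ξ^2)

/-- The semiclassical Weyl quantization
`Op_h^w(a)v(x) = (2πh)⁻¹ ∫∫ e^{i(x−y)ξ/h} a((x+y)/2,ξ) v(y) dy dξ`
(iterated integral, first in `y`, then in `ξ`). -/
def OpW (h : ℝ) (a : ℝ → ℝ → ℂ) (v : ℝ → ℂ) : ℝ → ℂ := fun x =>
  ((2 * Real.pi * h : ℝ) : ℂ)⁻¹ * ∫ ξ : ℝ, ∫ y : ℝ,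
    Complex.exp (Complex.I * (((x - y) * ξ / h : ℝ) : ℂ)) * a ((x + y)/2) ξ * v y

/-- The norm `‖v‖_{W^{ρ,∞}_h} = ‖⟨hD⟩^ρ v‖_{L^∞}`. -/
def WhNorm (h r : ℝ) (f : ℝ → ℂ) : ℝ := LinfNorm (JBh h r f)

/-- The operator `ℒ = (1/h) Op_h^w(x+p'(ξ))`, i.e. `ℒv = h⁻¹(x v + p'(hD)v)`. -/
def Lcal (h : ℝ) (v : ℝ → ℂ) : ℝ → ℂ :=
  fun x => ((h : ℝ) : ℂ)⁻¹ * ((x : ℂ) * v x + FMul (fun ξ => ((pprime (h*ξ) : ℝ) : ℂ)) v x)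

/-!
On the Fourier side `⟨hD⟩²` is multiplication by a polynomial, and `⟨hD⟩² Op_h^w(b) = Op_h^w(b')`
with `b'` obtained from `b` by multiplications by `ξ` and derivatives `h∂_x`. Since
`|ξ| ≲ h^{-β} (1 + βh^β|ξ|)`, passing from `b` to `b'` keeps the symbol class at the cost of a
factor `h^{-2β}`. For `m` with `m - ρ/2 > 1/2` write `⟨hD⟩^ρ = ⟨hD⟩^{ρ-2m} ⟨hD⟩^{2m}`: the kernel of
`⟨hD⟩^{ρ-2m}` is integrable uniformly in `h`, so only the sup norm of `Op_h^w(b)v` remains to be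
estimated.

One integration by parts in `ξ` bounds the kernel of `Op_h^w(b)` at `(x,y)` by
`h⁻¹ ⟨(x-y)/√h⟩⁻¹ sup_X ∫ ⟨(X+p'(ξ))/√h⟩⁻¹ (1+βh^β|ξ|)^{-3} dξ`. As `p''(ξ) = ⟨ξ⟩^{-3}`, replacing
`(1+βh^β|ξ|)^{-3}` by `h^{-3β} ⟨ξ⟩^{-3}` and substituting `z = p'(ξ) ∈ (-1,1)` shows that the
integral is `O(h^{1/2-4β})`. The Cauchy–Schwarz inequality in `y` contributes the factor
`‖⟨·/√h⟩⁻¹‖_{L²} ∼ h^{1/4}`, and `-1 + 1/2 + 1/4 = -1/4`.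
-/

open Complex (I)
open Asymptotics Real Set
open scoped SchwartzMap

/-! ### Derivatives of Schwartz symbols -/

theorem pow_mul_of_mul_eq_mul_add_one {R : Type*} [Semiring R] {d x : R} (hdx : d * x = x * d + 1)
    (n : ℕ) : d ^ n * x = x * d ^ n + n • d ^ (n - 1) := by
  induction n with
  | zero => simp
  | succ n ih =>
    have hn : n • d ^ (n - 1) * d = n • d ^ n := by
      cases n <;> simp [pow_succ, add_mul, mul_assoc]
    rw [pow_succ, mul_assoc, hdx, mul_add, ← mul_assoc, ih, add_mul, hn, mul_one, mul_assoc,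
      Nat.add_sub_cancel, succ_nsmul, add_assoc]

/-- The derivative `∂_x` of Schwartz symbols `b(x,ξ)`, as an element of the ring of continuous
operators on `𝓢(ℝ²)`. -/
def derivX : 𝓢(ℝ × ℝ, ℂ) →L[ℂ] 𝓢(ℝ × ℝ, ℂ) := LineDeriv.lineDerivOpCLM ℂ _ ((1 : ℝ), (0 : ℝ))

/-- The derivative `∂_ξ` of Schwartz symbols `b(x,ξ)`. -/
def derivXi : 𝓢(ℝ × ℝ, ℂ) →L[ℂ] 𝓢(ℝ × ℝ, ℂ) := LineDeriv.lineDerivOpCLM ℂ _ ((0 : ℝ), (1 : ℝ))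

/-- Multiplication of Schwartz symbols `b(x,ξ)` by `ξ`. -/
def mulXi : 𝓢(ℝ × ℝ, ℂ) →L[ℂ] 𝓢(ℝ × ℝ, ℂ) :=
  SchwartzMap.smulLeftCLM ℂ (fun q : ℝ × ℝ => (q.2 : ℂ))

theorem derivX_apply (b : 𝓢(ℝ × ℝ, ℂ)) (q : ℝ × ℝ) : derivX b q = fderiv ℝ b q (1, 0) := rfl

theorem derivXi_apply (b : 𝓢(ℝ × ℝ, ℂ)) (q : ℝ × ℝ) : derivXi b q = fderiv ℝ b q (0, 1) := rfl

theorem mulXi_apply (b : 𝓢(ℝ × ℝ, ℂ)) (q : ℝ × ℝ) : mulXi b q = q.2 * b q := by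
  have hgrowth : (fun q : ℝ × ℝ => (q.2 : ℂ)).HasTemperateGrowth :=
    (Complex.ofRealCLM.comp (ContinuousLinearMap.snd ℝ ℝ ℝ)).hasTemperateGrowth
  simp [mulXi, SchwartzMap.smulLeftCLM_apply_apply hgrowth]

theorem hasDerivAt_fst (b : 𝓢(ℝ × ℝ, ℂ)) (x ξ : ℝ) :
    HasDerivAt (fun x' => b (x', ξ)) (derivX b (x, ξ)) x :=
  b.differentiableAt.hasFDerivAt.comp_hasDerivAt x
    ((hasDerivAt_id x).prodMk (hasDerivAt_const x ξ))

theorem hasDerivAt_snd (b : 𝓢(ℝ × ℝ, ℂ)) (x ξ : ℝ) :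
    HasDerivAt (fun ξ' => b (x, ξ')) (derivXi b (x, ξ)) ξ :=
  b.differentiableAt.hasFDerivAt.comp_hasDerivAt ξ
    ((hasDerivAt_const ξ x).prodMk (hasDerivAt_id ξ))

theorem commute_derivX_derivXi : Commute derivX derivXi := by
  ext b q
  have hdiff : DifferentiableAt ℝ (fderiv ℝ b) q :=
    ((b.smooth 2).fderiv_right (m := 1) (by norm_num)).differentiable (by norm_num) q
  have hsymm : IsSymmSndFDerivAt ℝ b q := (b.smooth 2).contDiffAt.isSymmSndFDerivAt (by simp)
  have hX : ⇑(derivX b) = fun q => fderiv ℝ b q (1, 0) := rfl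
  have hXi : ⇑(derivXi b) = fun q => fderiv ℝ b q (0, 1) := rfl
  rw [mul_apply_eq_comp, mul_apply_eq_comp, derivX_apply, derivXi_apply,
    hX, hXi, fderiv_clm_apply hdiff (by fun_prop), fderiv_clm_apply hdiff (by fun_prop)]
  simpa using hsymm.eq (1, 0) (0, 1)

theorem commute_derivX_mulXi : Commute derivX mulXi := by
  ext b ⟨x, ξ⟩
  have hmul := hasDerivAt_fst (mulXi b) x ξ
  simp only [mulXi_apply] at hmul
  simpa [mulXi_apply] using hmul.unique ((hasDerivAt_fst b x ξ).const_mul (ξ : ℂ))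

theorem derivXi_mul_mulXi : derivXi * mulXi = mulXi * derivXi + 1 := by
  ext b ⟨x, ξ⟩
  have hmul := hasDerivAt_snd (mulXi b) x ξ
  simp only [mulXi_apply] at hmul
  simpa [mulXi_apply, add_comm] using
    hmul.unique ((hasDerivAt_id ξ).ofReal_comp.mul (hasDerivAt_snd b x ξ))

theorem pd1_iterate (n : ℕ) (b : 𝓢(ℝ × ℝ, ℂ)) :
    pd1^[n] (fun x ξ => b (x, ξ)) = fun x ξ => (derivX ^ n) b (x, ξ) := by
  induction n generalizing b with
  | zero => rfl
  | succ n ih =>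
    have hb : pd1 (fun x ξ => b (x, ξ)) = fun x ξ => derivX b (x, ξ) :=
      funext₂ fun x ξ => (hasDerivAt_fst b x ξ).deriv
    rw [Function.iterate_succ_apply, hb, ih, pow_succ, mul_apply_eq_comp]

theorem pd2_iterate (n : ℕ) (b : 𝓢(ℝ × ℝ, ℂ)) :
    pd2^[n] (fun x ξ => b (x, ξ)) = fun x ξ => (derivXi ^ n) b (x, ξ) := by
  induction n generalizing b with
  | zero => rfl
  | succ n ih =>
    have hb : pd2 (fun x ξ => b (x, ξ)) = fun x ξ => derivXi b (x, ξ) :=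
      funext₂ fun x ξ => (hasDerivAt_snd b x ξ).deriv
    rw [Function.iterate_succ_apply, hb, ih, pow_succ, mul_apply_eq_comp]

/-! ### Fourier multipliers on bounded functions -/

theorem norm_FT_le (f : ℝ → ℂ) (z : ℝ) : ‖FT f z‖ ≤ ∫ x, ‖f x‖ :=
  VectorFourier.norm_fourierIntegral_le_integral_norm _ _ _ f z

theorem continuous_FT {f : ℝ → ℂ} (hf : Integrable f) : Continuous (FT f) :=
  VectorFourier.fourierIntegral_continuous continuous_fourierChar (by fun_prop) hf

theorem FT_const_smul (c : ℂ) (f : ℝ → ℂ) : FT (c • f) = c • FT f :=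
  VectorFourier.fourierIntegral_const_smul _ _ _ f c

theorem FT_sub {f g : ℝ → ℂ} (hf : Integrable f) (hg : Integrable g) :
    FT (f - g) = FT f - FT g := by
  have hneg : FT (-g) = -FT g := by simpa using FT_const_smul (-1) g
  rw [sub_eq_add_neg, sub_eq_add_neg, ← hneg]
  exact VectorFourier.fourierIntegral_add continuous_fourierChar (by fun_prop) hf hg.neg

theorem FT_of_hasDerivAt {f f' : ℝ → ℂ} (hderiv : ∀ x, HasDerivAt f (f' x) x)
    (hf : Integrable f) (hf' : Integrable f') (z : ℝ) : FT f' z = 2 * π * I * z * FT f z := by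
  have hf'_eq : deriv f = f' := funext fun x => (hderiv x).deriv
  have hFT := Real.fourier_deriv hf (fun x => (hderiv x).differentiableAt) (hf'_eq ▸ hf')
  rw [hf'_eq] at hFT
  exact congrFun hFT z

theorem integrable_FT_of_hasDerivAt {f f' f'' : ℝ → ℂ} (hderiv : ∀ x, HasDerivAt f (f' x) x)
    (hderiv' : ∀ x, HasDerivAt f' (f'' x) x) (hf : Integrable f) (hf' : Integrable f')
    (hf'' : Integrable f'') : Integrable (FT f) := by
  refine (integrable_inv_one_add_sq.const_mul ((∫ x, ‖f x‖) + ∫ x, ‖f'' x‖)).mono'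
    (continuous_FT hf).aestronglyMeasurable (Eventually.of_forall fun z => ?_)
  have hFT'' : ‖FT f'' z‖ = (2 * π) ^ 2 * (z ^ 2 * ‖FT f z‖) := by
    rw [FT_of_hasDerivAt hderiv' hf' hf'', FT_of_hasDerivAt hderiv hf hf']
    simp only [norm_mul, Complex.norm_I, Complex.norm_ofNat, Complex.norm_real, Real.norm_eq_abs,
      abs_of_pos pi_pos]
    rw [← sq_abs z]
    ring
  have hdecay : z ^ 2 * ‖FT f z‖ ≤ ∫ x, ‖f'' x‖ := by
    refine le_trans ?_ (hFT'' ▸ norm_FT_le f'' z)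
    exact le_mul_of_one_le_left (by positivity) (by nlinarith [pi_gt_three])
  rw [← div_eq_mul_inv, le_div_iff₀ (by positivity)]
  linarith [norm_FT_le f z]

theorem FT_exp_mul_comp_mul_left (f : ℝ → ℂ) {h : ℝ} (hh : h ≠ 0) (x z : ℝ) :
    FT (fun ξ => Complex.exp (((2 * π * (ξ * x) : ℝ) : ℂ) * I) * f (h * ξ)) z
      = |h⁻¹| • FT f ((z - x) / h) := by
  have hh' : (h : ℂ) ≠ 0 := by exact_mod_cast hh
  simp only [FT]
  rw [Real.fourier_real_eq_integral_exp_smul, Real.fourier_real_eq_integral_exp_smul,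
    ← Measure.integral_comp_mul_left]
  congr 1
  ext ξ
  rw [smul_eq_mul, smul_eq_mul, ← mul_assoc, ← Complex.exp_add]
  congr 2
  push_cast
  field_simp
  ring

theorem norm_FTinv_mul_FT_le {f w : ℝ → ℂ} (hf : Integrable f) (hFf : Integrable (FT f)) {h : ℝ}
    (hh : h ≠ 0) (hw : Integrable w) {B : ℝ} (hB : ∀ z, ‖w z‖ ≤ B) (x : ℝ) :
    ‖FTinv (fun ξ => f (h * ξ) * FT w ξ) x‖ ≤ (∫ z, ‖FT f z‖) * B := by
  let φ : ℝ → ℂ := fun ξ => Complex.exp (((2 * π * (ξ * x) : ℝ) : ℂ) * I) * f (h * ξ)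
  have hφ : Integrable φ := (hf.comp_mul_left' hh).bdd_mul (c := 1)
    (Continuous.aestronglyMeasurable (by fun_prop))
    (Eventually.of_forall fun ξ => (Complex.norm_exp_ofReal_mul_I _).le)
  have htransfer : FTinv (fun ξ => f (h * ξ) * FT w ξ) x = ∫ z, w z * FT φ z := calc
    FTinv (fun ξ => f (h * ξ) * FT w ξ) x = ∫ ξ, FT w ξ • φ ξ := by
      simp only [FTinv, Real.fourierInv_eq', φ, smul_eq_mul, RCLike.inner_apply, conj_trivial]
      congr 1
      ext ξ
      rw [mul_comm x ξ]
      ring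
    _ = ∫ z, w z * FT φ z := by
      have hflip := VectorFourier.integral_fourierIntegral_smul_eq_flip (μ := volume)
        (ν := volume) (L := innerₗ ℝ) Real.continuous_fourierChar continuous_inner hw hφ
      rwa [flip_innerₗ] at hflip
  have hFφ : (fun z => ‖FT φ z‖) = fun z => |h⁻¹| * ‖FT f ((z - x) / h)‖ := by
    ext z
    rw [FT_exp_mul_comp_mul_left f hh, norm_smul, Real.norm_eq_abs, abs_abs]
  have hFφ_int : Integrable fun z => ‖FT φ z‖ :=
    hFφ ▸ ((hFf.norm.comp_div hh).comp_sub_right x).const_mul |h⁻¹|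
  calc ‖FTinv (fun ξ => f (h * ξ) * FT w ξ) x‖ ≤ ∫ z, B * ‖FT φ z‖ := by
        rw [htransfer]
        refine norm_integral_le_of_norm_le (hFφ_int.const_mul B) (Eventually.of_forall fun z => ?_)
        exact (norm_mul_le _ _).trans (mul_le_mul_of_nonneg_right (hB z) (norm_nonneg _))
    _ = (∫ z, ‖FT f z‖) * B := by
        rw [integral_const_mul, hFφ, integral_const_mul,
          integral_sub_right_eq_self (fun z => ‖FT f (z / h)‖) x,
          Measure.integral_comp_div (fun z => ‖FT f z‖) h, smul_eq_mul, ← mul_assoc |h⁻¹|,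
          ← abs_mul, inv_mul_cancel₀ hh, abs_one, one_mul, mul_comm]

/-- The Bessel multiplier `⟨η⟩^{-2r} = (1+η²)^{-r}`. -/
def bessel (r η : ℝ) : ℝ := (1 + η ^ 2) ^ (-r)

theorem bessel_nonneg (r η : ℝ) : 0 ≤ bessel r η := rpow_nonneg (by positivity) _

theorem one_add_sq_mul_bessel_add_one (r η : ℝ) : (1 + η ^ 2) * bessel (r + 1) η = bessel r η := by
  rw [bessel, bessel, show -r = 1 + -(r + 1) by ring, rpow_add (by positivity), rpow_one]

theorem integrable_bessel {r : ℝ} (hr : 1 / 2 < r) : Integrable (bessel r) := by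
  have hpow := integrable_rpow_neg_one_add_norm_sq (E := ℝ) (μ := volume) (r := 2 * r)
    (by norm_num; linarith)
  have hexp : -(2 * r) / 2 = -r := by ring
  simp only [Real.norm_eq_abs, sq_abs, hexp] at hpow
  exact hpow

theorem hasDerivAt_bessel (r η : ℝ) :
    HasDerivAt (bessel r) (-(2 * r) * (η * bessel (r + 1) η)) η := by
  have hsq : HasDerivAt (fun η : ℝ => 1 + η ^ 2) (2 * η) η := by
    simpa using (hasDerivAt_pow 2 η).const_add 1
  refine (hsq.rpow_const (p := -r) (Or.inl (by positivity))).congr_deriv ?_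
  rw [bessel, neg_add']
  ring

theorem hasDerivAt_mul_bessel (r η : ℝ) :
    HasDerivAt (fun η => η * bessel (r + 1) η)
      (2 * (r + 1) * bessel (r + 2) η - (2 * r + 1) * bessel (r + 1) η) η := by
  have hrec : (1 + η ^ 2) * bessel (r + 2) η = bessel (r + 1) η := by
    rw [← one_add_sq_mul_bessel_add_one (r + 1), add_assoc, one_add_one_eq_two]
  refine ((hasDerivAt_id η).mul (hasDerivAt_bessel (r + 1) η)).congr_deriv ?_
  rw [id, add_assoc, one_add_one_eq_two]
  linear_combination -2 * (r + 1) * hrec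

theorem integrable_FT_bessel {r : ℝ} (hr : 1 / 2 < r) :
    Integrable (FT fun η => (bessel r η : ℂ)) := by
  have hmul : Integrable fun η => η * bessel (r + 1) η := by
    refine (integrable_bessel hr).mono' (Continuous.aestronglyMeasurable <|
      continuous_iff_continuousAt.2 fun η => (hasDerivAt_mul_bessel r η).continuousAt)
      (Eventually.of_forall fun η => ?_)
    rw [norm_mul, Real.norm_eq_abs, Real.norm_of_nonneg (bessel_nonneg _ _),
      ← one_add_sq_mul_bessel_add_one r η]
    gcongr
    · exact bessel_nonneg _ _
    · nlinarith [sq_nonneg (|η| - 1), sq_abs η]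
  exact integrable_FT_of_hasDerivAt
    (fun η => (hasDerivAt_bessel r η).ofReal_comp)
    (fun η => ((hasDerivAt_mul_bessel r η).const_mul (-(2 * r))).ofReal_comp)
    (integrable_bessel hr).ofReal (hmul.const_mul _).ofReal
    ((((integrable_bessel (by linarith)).const_mul _).sub
      ((integrable_bessel (by linarith)).const_mul _)).const_mul _).ofReal

theorem norm_JBh_le {m : ℕ} {ρ h : ℝ} (hm : 1 / 2 < m - ρ / 2) (hh : h ≠ 0) {u w : ℝ → ℂ}
    (hw : Integrable w) (huw : ∀ ξ, FT w ξ = ((1 + (h * ξ) ^ 2 : ℝ) : ℂ) ^ m * FT u ξ) {B : ℝ}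
    (hB : ∀ z, ‖w z‖ ≤ B) (x : ℝ) :
    ‖JBh h ρ u x‖ ≤ (∫ z, ‖FT (fun η => (bessel (m - ρ / 2) η : ℂ)) z‖) * B := by
  have hmultiplier : JBh h ρ u
      = FTinv (fun ξ => (bessel (m - ρ / 2) (h * ξ) : ℂ) * FT w ξ) := by
    unfold JBh FMul
    congr 1
    ext ξ
    rw [huw, ← mul_assoc, ← Complex.ofReal_pow, ← Complex.ofReal_mul, bessel,
      ← rpow_add_natCast (by positivity)]
    ring_nf
  rw [hmultiplier]
  exact norm_FTinv_mul_FT_le (f := fun η => (bessel (m - ρ / 2) η : ℂ))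
    (integrable_bessel hm).ofReal (integrable_FT_bessel hm) hh hw hB x

/-! ### Weyl quantization of Schwartz symbols -/

theorem exists_norm_le_inv_one_add_sq (b : 𝓢(ℝ × ℝ, ℂ)) :
    ∃ C : ℝ, ∀ x ξ, ‖b (x, ξ)‖ ≤ C * ((1 + x ^ 2)⁻¹ * (1 + ξ ^ 2)⁻¹) := by
  obtain ⟨C, hC⟩ : ∃ C, ∀ q, ‖b q‖ * (1 + ‖q‖) ^ 4 ≤ C := ⟨_, fun q => by
    simpa [mul_comm] using SchwartzMap.one_add_le_sup_seminorm_apply (𝕜 := ℝ) (m := (4, 0))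
      le_rfl le_rfl b q⟩
  refine ⟨C, fun x ξ => ?_⟩
  rw [← mul_inv, ← div_eq_mul_inv, le_div_iff₀ (by positivity)]
  refine le_trans ?_ (hC (x, ξ))
  have one_add_sq_le : ∀ t : ℝ, |t| ≤ ‖(x, ξ)‖ → 1 + t ^ 2 ≤ (1 + ‖(x, ξ)‖) ^ 2 := fun t ht => by
    nlinarith [sq_abs t, abs_nonneg t]
  calc ‖b (x, ξ)‖ * ((1 + x ^ 2) * (1 + ξ ^ 2))
      ≤ ‖b (x, ξ)‖ * ((1 + ‖(x, ξ)‖) ^ 2 * (1 + ‖(x, ξ)‖) ^ 2) := by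
        gcongr
        exacts [one_add_sq_le x (le_max_left _ _), one_add_sq_le ξ (le_max_right _ _)]
    _ = ‖b (x, ξ)‖ * (1 + ‖(x, ξ)‖) ^ 4 := by ring

/-- The integrand of the double integral `Op_h^w(b)v(x)`, as a function of `q = (ξ, y)`. -/
def weylIntegrand (h : ℝ) (b : 𝓢(ℝ × ℝ, ℂ)) (v : ℝ → ℂ) (x : ℝ) (q : ℝ × ℝ) : ℂ :=
  Complex.exp (I * (((x - q.2) * q.1 / h : ℝ) : ℂ)) * b ((x + q.2) / 2, q.1) * v q.2

/-- The Weyl quantization `Op_h^w(b)` of a Schwartz symbol. -/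
abbrev weylOp (h : ℝ) (b : 𝓢(ℝ × ℝ, ℂ)) (v : ℝ → ℂ) : ℝ → ℂ := OpW h (fun x ξ => b (x, ξ)) v

/-- The symbol `iξb + (h/2)∂_x b` of the operator `h∂_x ∘ Op_h^w(b)`. -/
def weylDeriv (h : ℝ) : 𝓢(ℝ × ℝ, ℂ) →L[ℂ] 𝓢(ℝ × ℝ, ℂ) :=
  I • mulXi + ((h / 2 : ℝ) : ℂ) • derivX

/-- The symbol of the operator `⟨hD⟩² ∘ Op_h^w(b)`, where `hD` has the Fourier multiplier `hξ` for
the normalization `e^{-2πixξ}` of the Fourier transform, whence the factor `(2π)²`. -/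
def weylBracketSq (h : ℝ) : 𝓢(ℝ × ℝ, ℂ) →L[ℂ] 𝓢(ℝ × ℝ, ℂ) :=
  1 - ((((2 * π) ^ 2)⁻¹ : ℝ) : ℂ) • (weylDeriv h * weylDeriv h)

theorem norm_exp_I_mul_ofReal (t : ℝ) : ‖Complex.exp (I * t)‖ = 1 := by
  rw [mul_comm, Complex.norm_exp_ofReal_mul_I]

section WeylOp

variable {h : ℝ} (b : 𝓢(ℝ × ℝ, ℂ)) {v : ℝ → ℂ}

theorem norm_weylIntegrand (h : ℝ) (v : ℝ → ℂ) (x : ℝ) (q : ℝ × ℝ) :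
    ‖weylIntegrand h b v x q‖ = ‖b ((x + q.2) / 2, q.1)‖ * ‖v q.2‖ := by
  rw [weylIntegrand, norm_mul, norm_mul, norm_exp_I_mul_ofReal, one_mul]

theorem continuous_exp_mul_symbol (h : ℝ) : Continuous fun p : ℝ × ℝ × ℝ =>
    Complex.exp (I * (((p.1 - p.2.2) * p.2.1 / h : ℝ) : ℂ)) * b ((p.1 + p.2.2) / 2, p.2.1) := by
  have := b.continuous
  fun_prop

theorem integrable_inv_one_add_sq_mul_norm (hv : Integrable v) :
    Integrable fun q : ℝ × ℝ => (1 + q.1 ^ 2)⁻¹ * ‖v q.2‖ :=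
  integrable_inv_one_add_sq.mul_prod hv.norm

theorem exists_norm_weylIntegrand_le (h : ℝ) (v : ℝ → ℂ) :
    ∃ C : ℝ, ∀ x q, ‖weylIntegrand h b v x q‖ ≤ C * ((1 + q.1 ^ 2)⁻¹ * ‖v q.2‖) := by
  obtain ⟨C, hC⟩ := exists_norm_le_inv_one_add_sq b
  refine ⟨C, fun x q => ?_⟩
  have hC₀ : 0 ≤ C := by simpa using (norm_nonneg _).trans (hC 0 0)
  have hinv : (1 + ((x + q.2) / 2) ^ 2)⁻¹ ≤ 1 := inv_le_one_of_one_le₀ (by nlinarith)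
  rw [norm_weylIntegrand, ← mul_assoc]
  gcongr
  refine (hC _ _).trans (mul_le_mul_of_nonneg_left ?_ hC₀)
  exact mul_le_of_le_one_left (by positivity) hinv

theorem integrable_weylIntegrand (h : ℝ) (hv : Integrable v) (x : ℝ) :
    Integrable (weylIntegrand h b v x) := by
  obtain ⟨C, hC⟩ := exists_norm_weylIntegrand_le b h v
  have hsymbol := (continuous_exp_mul_symbol b h).comp (Continuous.prodMk_right x)
  exact ((integrable_inv_one_add_sq_mul_norm hv).const_mul C).mono'
    (hsymbol.aestronglyMeasurable.mul hv.1.comp_snd) (Eventually.of_forall (hC x))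

theorem weylOp_eq_integral (h : ℝ) (hv : Integrable v) (x : ℝ) :
    weylOp h b v x = ((2 * π * h : ℝ) : ℂ)⁻¹ * ∫ q, weylIntegrand h b v x q :=
  congrArg _ (integral_prod _ (integrable_weylIntegrand b h hv x)).symm

theorem integral_inv_one_add_sq_add_div_two (y : ℝ) :
    ∫ x : ℝ, (1 + ((x + y) / 2) ^ 2)⁻¹ = 2 * π := by
  rw [integral_add_right_eq_self (fun x : ℝ => (1 + (x / 2) ^ 2)⁻¹) y,
    Measure.integral_comp_div (fun x : ℝ => (1 + x ^ 2)⁻¹) 2, integral_univ_inv_one_add_sq]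
  simp

theorem integrable_weylIntegrand_prod (h : ℝ) (hv : Integrable v) :
    Integrable fun p : ℝ × ℝ × ℝ => weylIntegrand h b v p.1 p.2 := by
  obtain ⟨C, hC⟩ := exists_norm_le_inv_one_add_sq b
  let G : ℝ × ℝ → ℝ := fun q => (1 + q.1 ^ 2)⁻¹ * ‖v q.2‖
  have hG : Integrable G := integrable_inv_one_add_sq_mul_norm hv
  have hmajorant : Integrable fun p : ℝ × ℝ × ℝ => (1 + ((p.1 + p.2.2) / 2) ^ 2)⁻¹ * G p.2 := by
    refine (integrable_prod_iff' ?_).2 ⟨Eventually.of_forall fun q => ?_, ?_⟩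
    · have hcont : Continuous fun p : ℝ × ℝ × ℝ => (1 + ((p.1 + p.2.2) / 2) ^ 2)⁻¹ :=
        Continuous.inv₀ (by fun_prop) fun p => by positivity
      exact hcont.aestronglyMeasurable.mul hG.1.comp_snd
    · exact ((integrable_inv_one_add_sq.comp_div two_ne_zero).comp_add_right q.2).mul_const (G q)
    · have hnorm : ∀ (x : ℝ) (q : ℝ × ℝ), ‖(1 + ((x + q.2) / 2) ^ 2)⁻¹ * G q‖
          = (1 + ((x + q.2) / 2) ^ 2)⁻¹ * G q := fun x q => Real.norm_of_nonneg (by positivity)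
      simp only [hnorm, integral_mul_const, integral_inv_one_add_sq_add_div_two]
      exact hG.const_mul _
  refine (hmajorant.const_mul C).mono'
    ((continuous_exp_mul_symbol b h).aestronglyMeasurable.mul hv.1.comp_snd.comp_snd)
    (Eventually.of_forall fun ⟨x, ξ, y⟩ => ?_)
  calc ‖weylIntegrand h b v x (ξ, y)‖
      ≤ C * ((1 + ((x + y) / 2) ^ 2)⁻¹ * (1 + ξ ^ 2)⁻¹) * ‖v y‖ := by
        rw [norm_weylIntegrand]
        exact mul_le_mul_of_nonneg_right (hC _ _) (norm_nonneg _)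
    _ = C * ((1 + ((x + y) / 2) ^ 2)⁻¹ * ((1 + ξ ^ 2)⁻¹ * ‖v y‖)) := by ring

theorem integrable_weylOp (h : ℝ) (hv : Integrable v) : Integrable (weylOp h b v) := by
  simp only [funext (weylOp_eq_integral b h hv)]
  exact (integrable_weylIntegrand_prod b h hv).integral_prod_left.const_mul _

theorem weylOp_sub (h : ℝ) (c : 𝓢(ℝ × ℝ, ℂ)) (hv : Integrable v) :
    weylOp h (b - c) v = weylOp h b v - weylOp h c v := by
  ext x
  have hsub : weylIntegrand h (b - c) v x = weylIntegrand h b v x - weylIntegrand h c v x := by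
    ext q
    simp only [weylIntegrand, Pi.sub_apply, _root_.sub_apply]
    ring
  rw [Pi.sub_apply]
  simp only [weylOp_eq_integral _ h hv, hsub]
  rw [integral_sub' (integrable_weylIntegrand b h hv x) (integrable_weylIntegrand c h hv x),
    mul_sub]

theorem weylOp_smul (h : ℝ) (c : ℂ) (hv : Integrable v) :
    weylOp h (c • b) v = c • weylOp h b v := by
  ext x
  have hsmul : weylIntegrand h (c • b) v x = fun q => c * weylIntegrand h b v x q := by
    ext q
    simp only [weylIntegrand, _root_.smul_apply, smul_eq_mul]
    ring
  rw [Pi.smul_apply, smul_eq_mul]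
  simp only [weylOp_eq_integral _ h hv, hsmul, integral_const_mul]
  ring

theorem hasDerivAt_weylIntegrand (hh : h ≠ 0) (v : ℝ → ℂ) (x : ℝ) (q : ℝ × ℝ) :
    HasDerivAt (fun x => weylIntegrand h b v x q)
      ((h : ℂ)⁻¹ * weylIntegrand h (weylDeriv h b) v x q) x := by
  have hphase : HasDerivAt (fun x : ℝ => (((x - q.2) * q.1 / h : ℝ) : ℂ))
      ((1 * q.1 / h : ℝ) : ℂ) x :=
    (((hasDerivAt_id x).sub_const q.2).mul_const q.1 |>.div_const h).ofReal_comp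
  have hmid : HasDerivAt (fun x : ℝ => (x + q.2) / 2) (1 / 2) x :=
    ((hasDerivAt_id x).add_const q.2).div_const 2
  have hsymbol := (hasDerivAt_fst b ((x + q.2) / 2) q.1).scomp x hmid
  refine (((hphase.const_mul I).cexp.mul hsymbol).mul_const (v q.2)).congr_deriv ?_
  have hh' : (h : ℂ) ≠ 0 := by exact_mod_cast hh
  simp only [weylIntegrand, weylDeriv, _root_.add_apply, _root_.smul_apply, mulXi_apply,
    smul_eq_mul, Complex.real_smul, Function.comp_apply]
  push_cast
  field_simp

theorem hasDerivAt_weylOp (hh : h ≠ 0) (hv : Integrable v) (x : ℝ) :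
    HasDerivAt (weylOp h b v) ((h : ℂ)⁻¹ * weylOp h (weylDeriv h b) v x) x := by
  obtain ⟨C, hC⟩ := exists_norm_weylIntegrand_le (weylDeriv h b) h v
  have hderiv := (hasDerivAt_integral_of_dominated_loc_of_deriv_le (μ := volume) (s := univ)
    (F := weylIntegrand h b v)
    (F' := fun x q => (h : ℂ)⁻¹ * weylIntegrand h (weylDeriv h b) v x q) (x₀ := x)
    univ_mem (Eventually.of_forall fun x => (integrable_weylIntegrand b h hv x).1)
    (integrable_weylIntegrand b h hv x)
    ((integrable_weylIntegrand (weylDeriv h b) h hv x).const_mul _).1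
    (Eventually.of_forall fun q x _ => (norm_mul_le _ _).trans (by gcongr; exact hC x q))
    (((integrable_inv_one_add_sq_mul_norm hv).const_mul C).const_mul ‖(h : ℂ)⁻¹‖)
    (Eventually.of_forall fun q x _ => hasDerivAt_weylIntegrand b hh v x q)).2
  rw [funext (weylOp_eq_integral b h hv), weylOp_eq_integral (weylDeriv h b) h hv]
  refine (hderiv.const_mul _).congr_deriv ?_
  rw [integral_const_mul]
  ring

theorem FT_weylOp_weylDeriv (hh : h ≠ 0) (hv : Integrable v) (ξ : ℝ) :
    FT (weylOp h (weylDeriv h b) v) ξ = 2 * π * I * (h * ξ) * FT (weylOp h b v) ξ := by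
  have hh' : (h : ℂ) ≠ 0 := by exact_mod_cast hh
  have hFT : FT ((h : ℂ)⁻¹ • weylOp h (weylDeriv h b) v) ξ = 2 * π * I * ξ * FT (weylOp h b v) ξ :=
    FT_of_hasDerivAt (hasDerivAt_weylOp b hh hv) (integrable_weylOp b h hv)
      ((integrable_weylOp _ h hv).const_mul _) ξ
  rw [FT_const_smul, Pi.smul_apply, smul_eq_mul, inv_mul_eq_iff_eq_mul₀ hh'] at hFT
  rw [hFT]
  ring

theorem FT_weylOp_weylBracketSq (hh : h ≠ 0) (hv : Integrable v) (ξ : ℝ) :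
    FT (weylOp h (weylBracketSq h b) v) ξ
      = ((1 + (h * ξ) ^ 2 : ℝ) : ℂ) * FT (weylOp h b v) ξ := by
  have hbracket : weylBracketSq h b
      = b - ((((2 * π) ^ 2)⁻¹ : ℝ) : ℂ) • weylDeriv h (weylDeriv h b) := rfl
  rw [hbracket, weylOp_sub _ h _ hv, weylOp_smul _ h _ hv,
    FT_sub (integrable_weylOp _ h hv) ((integrable_weylOp _ h hv).smul _), FT_const_smul,
    Pi.sub_apply, Pi.smul_apply, FT_weylOp_weylDeriv _ hh hv, FT_weylOp_weylDeriv _ hh hv,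
    smul_eq_mul]
  have hπ : (π : ℂ) ≠ 0 := by exact_mod_cast pi_ne_zero
  push_cast
  field_simp
  linear_combination -(h : ℂ) ^ 2 * ξ ^ 2 * FT (weylOp h b v) ξ * Complex.I_sq

theorem FT_weylOp_weylBracketSq_pow (hh : h ≠ 0) (hv : Integrable v) (m : ℕ) (ξ : ℝ) :
    FT (weylOp h ((weylBracketSq h ^ m) b) v) ξ
      = ((1 + (h * ξ) ^ 2 : ℝ) : ℂ) ^ m * FT (weylOp h b v) ξ := by
  induction m generalizing b with
  | zero => simp
  | succ m ih =>
    rw [pow_succ, mul_apply_eq_comp, ih, FT_weylOp_weylBracketSq b hh hv, ← mul_assoc, ← pow_succ]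

end WeylOp

/-! ### Bounded families of symbols -/

/-- The frequency bracket `1 + βh^β|ξ|` of the classes `S_{δ,β}`. -/
def freqBracket (β h ξ : ℝ) : ℝ := 1 + β * h ^ β * |ξ|

/-- The weight `h^{-s} M (1 + βh^β|ξ|)^{-N}`; points `p = (i, x, ξ)` carry an index `i`, on which
`h` depends. -/
def symbolWeight {ι : Type*} (β s : ℝ) (h : ι → ℝ) (M : ι × ℝ × ℝ → ℝ) (N : ℕ) (p : ι × ℝ × ℝ) :
    ℝ :=
  h p.1 ^ (-s) * (M p / freqBracket β (h p.1) p.2.2 ^ N)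

/-- `b` is bounded in `h^{-s} S_{1/2,β}(M)`. The semiclassical parameter `h i` and the symbol `b i`
are indexed by the same type, so that constants uniform both in `h` and over a bounded set of
symbols are expressed by a single `=O[⊤]`. -/
def IsSymbol {ι : Type*} (β s : ℝ) (h : ι → ℝ) (M : ι × ℝ × ℝ → ℝ) (b : ι → 𝓢(ℝ × ℝ, ℂ)) : Prop :=
  ∀ α₁ α₂ N : ℕ,
    (fun p : ι × ℝ × ℝ => √(h p.1) ^ (α₁ + α₂) • (derivX ^ α₁ * derivXi ^ α₂) (b p.1) p.2)
      =O[⊤] symbolWeight β s h M N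

section SymbolClass

theorem one_le_freqBracket {β h : ℝ} (hβ : 0 ≤ β) (hh : 0 ≤ h) (ξ : ℝ) :
    1 ≤ freqBracket β h ξ :=
  le_add_of_nonneg_right (by positivity)

theorem abs_le_freqBracket {β h : ℝ} (hβ : 0 < β) (hh : 0 < h) (ξ : ℝ) :
    |ξ| ≤ β⁻¹ * h ^ (-β) * freqBracket β h ξ := by
  rw [rpow_neg hh.le, ← mul_inv, ← div_eq_inv_mul, le_div_iff₀ (by positivity), freqBracket]
  linarith

theorem freqBracket_pos {β h : ℝ} (hβ : 0 ≤ β) (hh : 0 ≤ h) (ξ : ℝ) : 0 < freqBracket β h ξ :=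
  one_pos.trans_le (one_le_freqBracket hβ hh ξ)

variable {ι : Type*} {β s t : ℝ} {h : ι → ℝ} {M : ι × ℝ × ℝ → ℝ} {b c : ι → 𝓢(ℝ × ℝ, ℂ)}

theorem symbolWeight_isBigO_of_le (hh : ∀ i, h i ∈ Ioc 0 1) (hst : s ≤ t) (N : ℕ) :
    symbolWeight β s h M N =O[⊤] symbolWeight β t h M N := by
  refine IsBigO.of_bound 1 (Eventually.of_forall fun p => ?_)
  have hpos := (hh p.1).1
  rw [symbolWeight, symbolWeight, norm_mul, norm_mul, one_mul,
    Real.norm_of_nonneg (rpow_nonneg hpos.le _), Real.norm_of_nonneg (rpow_nonneg hpos.le _)]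
  exact mul_le_mul_of_nonneg_right
    (rpow_le_rpow_of_exponent_ge hpos (hh p.1).2 (neg_le_neg hst)) (norm_nonneg _)

theorem mul_symbolWeight_isBigO (hβ : 0 < β) (hh : ∀ i, 0 < h i) (N : ℕ) :
    (fun p : ι × ℝ × ℝ => p.2.2 * symbolWeight β s h M (N + 1) p)
      =O[⊤] symbolWeight β (s + β) h M N := by
  refine IsBigO.of_bound β⁻¹ (Eventually.of_forall fun p => ?_)
  obtain ⟨i, x, ξ⟩ := p
  have hpos := hh i
  have hbracket := freqBracket_pos hβ.le hpos.le ξ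
  simp only [symbolWeight, norm_mul, norm_div, norm_pow, Real.norm_eq_abs ξ,
    Real.norm_of_nonneg (rpow_nonneg hpos.le _), Real.norm_of_nonneg hbracket.le]
  calc |ξ| * (h i ^ (-s) * (‖M (i, x, ξ)‖ / freqBracket β (h i) ξ ^ (N + 1)))
      ≤ β⁻¹ * h i ^ (-β) * freqBracket β (h i) ξ
          * (h i ^ (-s) * (‖M (i, x, ξ)‖ / freqBracket β (h i) ξ ^ (N + 1))) := by
        gcongr
        exact abs_le_freqBracket hβ hpos ξ
    _ = β⁻¹ * (h i ^ (-(s + β)) * (‖M (i, x, ξ)‖ / freqBracket β (h i) ξ ^ N)) := by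
        rw [neg_add, rpow_add hpos, pow_succ]
        field_simp

namespace IsSymbol

theorem mono (hb : IsSymbol β s h M b) (hh : ∀ i, h i ∈ Ioc 0 1) (hst : s ≤ t) :
    IsSymbol β t h M b :=
  fun α₁ α₂ N => (hb α₁ α₂ N).trans (symbolWeight_isBigO_of_le hh hst N)

theorem add (hb : IsSymbol β s h M b) (hc : IsSymbol β s h M c) :
    IsSymbol β s h M fun i => b i + c i := fun α₁ α₂ N => by
  simpa only [map_add, _root_.add_apply, smul_add] using (hb α₁ α₂ N).add (hc α₁ α₂ N)

theorem smul (hb : IsSymbol β s h M b) {k : ι → ℂ} {K : ℝ} (hk : ∀ i, ‖k i‖ ≤ K) :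
    IsSymbol β s h M fun i => k i • b i := fun α₁ α₂ N => by
  refine IsBigO.trans (IsBigO.of_bound K (Eventually.of_forall fun p => ?_)) (hb α₁ α₂ N)
  rw [map_smul, _root_.smul_apply, smul_comm, norm_smul]
  exact mul_le_mul_of_nonneg_right (hk p.1) (norm_nonneg _)

theorem sqrt_smul_derivX (hb : IsSymbol β s h M b) :
    IsSymbol β s h M fun i => (√(h i) : ℂ) • derivX (b i) := fun α₁ α₂ N => by
  refine (hb (α₁ + 1) α₂ N).congr_left fun p => ?_
  have hcomm : derivX ^ (α₁ + 1) * derivXi ^ α₂ = derivX ^ α₁ * derivXi ^ α₂ * derivX := by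
    rw [pow_succ, mul_assoc, (commute_derivX_derivXi.pow_right α₂).eq, mul_assoc]
  rw [hcomm, map_smul, _root_.smul_apply, mul_apply_eq_comp, Complex.coe_smul, smul_smul,
    ← pow_succ, Nat.add_right_comm]

theorem mulXi (hb : IsSymbol β s h M b) (hβ : 0 < β) (hh : ∀ i, h i ∈ Ioc 0 1) :
    IsSymbol β (s + β) h M fun i => mulXi (b i) := fun α₁ α₂ N => by
  have hcomm : derivX ^ α₁ * derivXi ^ α₂ * _root_.mulXi
      = _root_.mulXi * (derivX ^ α₁ * derivXi ^ α₂)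
        + α₂ • (derivX ^ α₁ * derivXi ^ (α₂ - 1)) := by
    rw [mul_assoc, pow_mul_of_mul_eq_mul_add_one derivXi_mul_mulXi, mul_add, ← mul_assoc,
      (commute_derivX_mulXi.pow_left α₁).eq, mul_assoc, mul_smul_comm]
  have hsplit : ∀ p : ι × ℝ × ℝ,
      √(h p.1) ^ (α₁ + α₂) • (derivX ^ α₁ * derivXi ^ α₂) (_root_.mulXi (b p.1)) p.2
        = (p.2.2 : ℝ) • (√(h p.1) ^ (α₁ + α₂) • (derivX ^ α₁ * derivXi ^ α₂) (b p.1) p.2)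
          + (α₂ : ℝ) • (√(h p.1) ^ (α₁ + α₂) • (derivX ^ α₁ * derivXi ^ (α₂ - 1)) (b p.1) p.2) := by
    intro p
    rw [← mul_apply_eq_comp, hcomm, _root_.add_apply, _root_.add_apply, mul_apply_eq_comp,
      mulXi_apply, _root_.smul_apply, _root_.smul_apply, smul_add, ← Nat.cast_smul_eq_nsmul ℝ,
      smul_comm (α₂ : ℝ), ← Complex.real_smul, smul_comm p.2.2]
  have hfirst := ((isBigO_refl (fun p : ι × ℝ × ℝ => p.2.2) ⊤).smul (hb α₁ α₂ (N + 1))).trans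
    (mul_symbolWeight_isBigO (h := h) (M := M) (s := s) hβ (fun i => (hh i).1) N)
  refine (hfirst.add (IsBigO.const_smul_left ?_ (α₂ : ℝ))).congr_left fun p => (hsplit p).symm
  have hpred : (fun p : ι × ℝ × ℝ =>
      √(h p.1) ^ (α₁ + α₂) • (derivX ^ α₁ * derivXi ^ (α₂ - 1)) (b p.1) p.2)
        =O[⊤] fun p => √(h p.1) ^ (α₁ + (α₂ - 1)) •
          (derivX ^ α₁ * derivXi ^ (α₂ - 1)) (b p.1) p.2 := by
    refine IsBigO.of_bound 1 (Eventually.of_forall fun p => ?_)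
    rw [norm_smul, norm_smul, one_mul, Real.norm_of_nonneg (by positivity),
      Real.norm_of_nonneg (by positivity)]
    exact mul_le_mul_of_nonneg_right (pow_le_pow_of_le_one (sqrt_nonneg _)
      (sqrt_le_one.2 (hh p.1).2) (by lia)) (norm_nonneg _)
  exact (hpred.trans (hb α₁ (α₂ - 1) N)).trans (symbolWeight_isBigO_of_le hh (by linarith) N)

theorem weylDeriv (hb : IsSymbol β s h M b) (hβ : 0 < β) (hh : ∀ i, h i ∈ Ioc 0 1) :
    IsSymbol β (s + β) h M fun i => weylDeriv (h i) (b i) := by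
  have hI := (hb.mulXi hβ hh).smul (k := fun _ => I) (K := 1) fun _ => Complex.norm_I.le
  have hsqrt : ∀ i, ‖((√(h i) / 2 : ℝ) : ℂ)‖ ≤ 1 := fun i => by
    rw [Complex.norm_real, Real.norm_of_nonneg (by positivity)]
    linarith [sqrt_le_one.2 (hh i).2]
  have hX := (hb.sqrt_smul_derivX.smul hsqrt).mono hh (le_add_of_nonneg_right hβ.le : s ≤ s + β)
  convert hI.add hX using 2 with i
  rw [smul_smul, ← Complex.ofReal_mul, div_mul_eq_mul_div, mul_self_sqrt (hh i).1.le]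
  rfl

theorem weylBracketSq (hb : IsSymbol β s h M b) (hβ : 0 < β) (hh : ∀ i, h i ∈ Ioc 0 1) :
    IsSymbol β (s + 2 * β) h M fun i => weylBracketSq (h i) (b i) := by
  have hsq := ((hb.weylDeriv hβ hh).weylDeriv hβ hh).smul
    (k := fun _ => -((((2 * π) ^ 2)⁻¹ : ℝ) : ℂ)) fun _ => le_rfl
  convert (hb.mono hh (by linarith)).add (hsq.mono hh (by linarith : _ ≤ s + 2 * β)) using 2 with i
  rw [neg_smul, ← sub_eq_add_neg]
  rfl

theorem weylBracketSq_pow (hb : IsSymbol β s h M b) (hβ : 0 < β) (hh : ∀ i, h i ∈ Ioc 0 1)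
    (m : ℕ) : IsSymbol β (s + 2 * m * β) h M fun i => (_root_.weylBracketSq (h i) ^ m) (b i) := by
  induction m with
  | zero => simpa using hb
  | succ m ih =>
    have horder : s + 2 * ↑(m + 1) * β = s + 2 * m * β + 2 * β := by
      push_cast
      ring
    simpa only [horder, pow_succ', mul_apply_eq_comp] using ih.weylBracketSq hβ hh

theorem of_symBound {δ : ℝ} (hδ : δ ≤ 1 / 2) (hβ : 0 ≤ β) {W : ℝ → ℝ → ℝ → ℝ}
    {Cc : ℕ → ℕ → ℕ → ℝ} {a : ι → ℝ → ℝ → ℝ → ℂ} (hh : ∀ i, h i ∈ Ioc 0 1)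
    (ha : ∀ i, SymBound δ β W Cc (a i)) (hb : ∀ i x ξ, b i (x, ξ) = a i (h i) x ξ) :
    IsSymbol β 0 h (fun p => W (h p.1) p.2.1 p.2.2) b := fun α₁ α₂ N => by
  refine IsBigO.of_bound |Cc α₁ α₂ N| (Eventually.of_forall fun p => ?_)
  obtain ⟨i, x, ξ⟩ := p
  have hpos := (hh i).1
  have hbracket := freqBracket_pos hβ hpos.le ξ
  have hderiv : (derivX ^ α₁ * derivXi ^ α₂) (b i) (x, ξ)
      = (pd1^[α₁] (pd2^[α₂] (a i (h i)))) x ξ := by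
    rw [← funext₂ (hb i), pd2_iterate, pd1_iterate, mul_apply_eq_comp]
  have hscale : √(h i) ^ (α₁ + α₂) * h i ^ (-(δ * ((α₁ : ℝ) + α₂))) ≤ 1 := by
    rw [sqrt_eq_rpow, ← rpow_natCast, ← rpow_mul hpos.le, ← rpow_add hpos]
    refine rpow_le_one hpos.le (hh i).2 ?_
    push_cast
    nlinarith [(by positivity : (0 : ℝ) ≤ (α₁ : ℝ) + α₂)]
  have hbound := (ha i α₁ α₂ N (h i) (hh i) x ξ).trans (le_abs_self _)
  rw [← freqBracket, rpow_neg hbracket.le, rpow_natCast, abs_mul, abs_mul, abs_mul,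
    abs_of_pos (rpow_pos_of_pos hpos _), abs_of_pos (inv_pos.2 (pow_pos hbracket _))] at hbound
  rw [hderiv, norm_smul, norm_pow, Real.norm_of_nonneg (sqrt_nonneg _), symbolWeight, neg_zero,
    rpow_zero, one_mul, norm_div, norm_pow, Real.norm_of_nonneg hbracket.le, Real.norm_eq_abs]
  calc √(h i) ^ (α₁ + α₂) * ‖(pd1^[α₁] (pd2^[α₂] (a i (h i)))) x ξ‖
      ≤ √(h i) ^ (α₁ + α₂) * (|Cc α₁ α₂ N| * |W (h i) x ξ| * h i ^ (-(δ * ((α₁ : ℝ) + α₂)))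
          * (freqBracket β (h i) ξ ^ N)⁻¹) := by gcongr
    _ = (√(h i) ^ (α₁ + α₂) * h i ^ (-(δ * ((α₁ : ℝ) + α₂))))
          * (|Cc α₁ α₂ N| * (|W (h i) x ξ| / freqBracket β (h i) ξ ^ N)) := by ring
    _ ≤ |Cc α₁ α₂ N| * (|W (h i) x ξ| / freqBracket β (h i) ξ ^ N) :=
        mul_le_of_le_one_left (by positivity) hscale

end IsSymbol
end SymbolClass

/-! ### The weight along the Lagrangian -/

/-- The weight `⟨(x + p'(ξ))/√h⟩⁻¹`, concentrated at distance `√h` from the Lagrangian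
`x = -p'(ξ)`. -/
def lagrangianWeight (h x ξ : ℝ) : ℝ := (jap ((x + pprime ξ) / √h))⁻¹

section LagrangianWeight

theorem jap_pos (z : ℝ) : 0 < jap z := sqrt_pos.2 (by positivity)

theorem inv_jap_nonneg (z : ℝ) : 0 ≤ (jap z)⁻¹ := inv_nonneg.2 (jap_pos z).le

theorem jap_le_one_add_abs (z : ℝ) : jap z ≤ 1 + |z| := by
  rw [jap, sqrt_le_left (by positivity)]
  nlinarith [sq_abs z, abs_nonneg z]

theorem continuous_jap : Continuous jap := by
  unfold jap
  fun_prop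

theorem integrable_jap_rpow_neg {r : ℝ} (hr : 1 < r) : Integrable fun z => jap z ^ (-r) := by
  refine (integrable_rpow_neg_one_add_norm_sq (E := ℝ) (by simpa using hr)).congr
    (Eventually.of_forall fun z => ?_)
  simp only [Real.norm_eq_abs, sq_abs, jap]
  rw [sqrt_eq_rpow, ← rpow_mul (by positivity)]
  ring_nf

theorem inv_le_add_rpow_mul_rpow {s t ε : ℝ} (hs : 0 < s) (ht : 0 < t) (hε : 0 ≤ ε) :
    t⁻¹ ≤ s + s ^ (-ε) * t ^ (-(1 + ε)) := by
  rcases le_total t⁻¹ s with hle | hle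
  · exact hle.trans (le_add_of_nonneg_right (by positivity))
  · calc t⁻¹ = (t⁻¹) ^ (-ε) * t ^ (-(1 + ε)) := by
          rw [inv_rpow ht.le, ← rpow_neg ht.le, neg_neg, ← rpow_add ht, ← rpow_neg_one]
          ring_nf
      _ ≤ s ^ (-ε) * t ^ (-(1 + ε)) := mul_le_mul_of_nonneg_right
          (rpow_le_rpow_of_nonpos hs hle (neg_nonpos.2 hε)) (by positivity)
      _ ≤ s + s ^ (-ε) * t ^ (-(1 + ε)) := le_add_of_nonneg_left hs.le

theorem continuous_inv_jap_add_div (X s : ℝ) : Continuous fun z => (jap ((X + z) / s))⁻¹ :=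
  (continuous_jap.comp (by fun_prop)).inv₀ fun _ => (jap_pos _).ne'

theorem exists_setIntegral_inv_jap_le {ε : ℝ} (hε : 0 < ε) :
    ∃ C : ℝ, ∀ s ∈ Ioc (0 : ℝ) 1, ∀ X : ℝ,
      ∫ z in Icc (-1 : ℝ) 1, (jap ((X + z) / s))⁻¹ ≤ C * s ^ (1 - ε) := by
  refine ⟨2 + ∫ z, jap z ^ (-(1 + ε)), fun s hs X => ?_⟩
  have htail : Integrable fun z => jap ((X + z) / s) ^ (-(1 + ε)) :=
    ((integrable_jap_rpow_neg (by linarith)).comp_div hs.1.ne').comp_add_left X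
  have htail_eq : ∫ z, jap ((X + z) / s) ^ (-(1 + ε)) = s * ∫ z, jap z ^ (-(1 + ε)) := by
    rw [integral_add_left_eq_self (fun z => jap (z / s) ^ (-(1 + ε))),
      Measure.integral_comp_div (fun z => jap z ^ (-(1 + ε))), abs_of_pos hs.1, smul_eq_mul]
  have hpow : s ^ (-ε) * s = s ^ (1 - ε) := by
    rw [← rpow_add_one hs.1.ne', neg_add_eq_sub]
  have hle : s ≤ s ^ (1 - ε) := by
    simpa using rpow_le_rpow_of_exponent_ge hs.1 hs.2 (by linarith : 1 - ε ≤ 1)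
  calc ∫ z in Icc (-1 : ℝ) 1, (jap ((X + z) / s))⁻¹
      ≤ ∫ z in Icc (-1 : ℝ) 1, (s + s ^ (-ε) * jap ((X + z) / s) ^ (-(1 + ε))) :=
        setIntegral_mono (continuous_inv_jap_add_div X s).continuousOn.integrableOn_Icc
          ((integrable_const s).add (htail.const_mul _).integrableOn)
          fun z => inv_le_add_rpow_mul_rpow hs.1 (jap_pos _) hε.le
    _ = 2 * s + s ^ (-ε) * ∫ z in Icc (-1 : ℝ) 1, jap ((X + z) / s) ^ (-(1 + ε)) := by
        rw [integral_add (integrable_const s) (htail.const_mul _).integrableOn,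
          integral_const_mul]
        simp [one_add_one_eq_two]
    _ ≤ 2 * s + s ^ (-ε) * ∫ z, jap ((X + z) / s) ^ (-(1 + ε)) := by
        have := rpow_nonneg hs.1.le (-ε)
        gcongr 2 * s + s ^ (-ε) * ?_
        exact setIntegral_le_integral htail
          (Eventually.of_forall fun z => rpow_nonneg (jap_pos _).le _)
    _ ≤ (2 + ∫ z, jap z ^ (-(1 + ε))) * s ^ (1 - ε) := by
        rw [htail_eq, ← mul_assoc, hpow]
        linarith

theorem hasDerivAt_pprime (ξ : ℝ) : HasDerivAt pprime (jap ξ ^ 3)⁻¹ ξ := by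
  have hjap : HasDerivAt jap (ξ / jap ξ) ξ := by
    refine (((hasDerivAt_pow 2 ξ).const_add 1).sqrt (by positivity)).congr_deriv ?_
    simp only [jap]
    field_simp
    norm_num
  have hsq : jap ξ ^ 2 = 1 + ξ ^ 2 := sq_sqrt (by positivity)
  refine ((hasDerivAt_id ξ).div hjap (jap_pos ξ).ne').congr_deriv ?_
  have := (jap_pos ξ).ne'
  rw [id_eq]
  field_simp
  rw [hsq]
  ring

theorem injective_pprime : Function.Injective pprime :=
  (strictMono_of_deriv_pos fun ξ => by
    rw [(hasDerivAt_pprime ξ).deriv]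
    have := jap_pos ξ
    positivity).injective

theorem image_pprime_subset : pprime '' univ ⊆ Icc (-1) 1 := by
  rintro _ ⟨ξ, -, rfl⟩
  rw [mem_Icc, ← abs_le, pprime, abs_div, abs_of_nonneg (sqrt_nonneg _)]
  exact div_le_one_of_le₀ (abs_le_sqrt (by linarith)) (sqrt_nonneg _)

theorem integrable_inv_jap_pow_three_mul_comp_pprime {g : ℝ → ℝ}
    (hg : IntegrableOn g (Icc (-1) 1)) : Integrable fun ξ => (jap ξ ^ 3)⁻¹ * g (pprime ξ) := by
  have hchange := (integrableOn_image_iff_integrableOn_abs_deriv_smul MeasurableSet.univ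
    (fun ξ _ => (hasDerivAt_pprime ξ).hasDerivWithinAt) injective_pprime.injOn g).1
    (hg.mono_set image_pprime_subset)
  rw [integrableOn_univ] at hchange
  simpa only [abs_inv, abs_pow, abs_of_pos (jap_pos _), smul_eq_mul] using hchange

theorem integral_inv_jap_pow_three_mul_comp_pprime_le {g : ℝ → ℝ}
    (hg : IntegrableOn g (Icc (-1) 1)) (hg₀ : 0 ≤ g) :
    ∫ ξ, (jap ξ ^ 3)⁻¹ * g (pprime ξ) ≤ ∫ z in Icc (-1 : ℝ) 1, g z := by
  have hchange := integral_image_eq_integral_abs_deriv_smul MeasurableSet.univ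
    (fun ξ _ => (hasDerivAt_pprime ξ).hasDerivWithinAt) injective_pprime.injOn g
  simp only [abs_inv, abs_pow, abs_of_pos (jap_pos _), smul_eq_mul, setIntegral_univ] at hchange
  rw [← hchange]
  exact setIntegral_mono_set hg (Eventually.of_forall hg₀) image_pprime_subset.eventuallyLE

theorem inv_freqBracket_pow_three_le {β h : ℝ} (hβ : 0 < β) (hh : h ∈ Ioc 0 1) (ξ : ℝ) :
    (freqBracket β h ξ ^ 3)⁻¹ ≤ (1 + β⁻¹) ^ 3 * h ^ (-(3 * β)) * (jap ξ ^ 3)⁻¹ := by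
  have hbracket := freqBracket_pos hβ.le hh.1.le ξ
  have hone : 1 ≤ h ^ (-β) := one_le_rpow_of_pos_of_le_one_of_nonpos hh.1 hh.2 (by linarith)
  have hjap : jap ξ ≤ (1 + β⁻¹) * h ^ (-β) * freqBracket β h ξ :=
    calc jap ξ ≤ 1 + |ξ| := jap_le_one_add_abs ξ
      _ ≤ h ^ (-β) * freqBracket β h ξ + β⁻¹ * h ^ (-β) * freqBracket β h ξ :=
        add_le_add (one_le_mul_of_one_le_of_one_le hone (one_le_freqBracket hβ.le hh.1.le ξ))
          (abs_le_freqBracket hβ hh.1 ξ)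
      _ = (1 + β⁻¹) * h ^ (-β) * freqBracket β h ξ := by ring
  have hcube : h ^ (-(3 * β)) = (h ^ (-β)) ^ 3 := by
    rw [← rpow_mul_natCast hh.1.le]
    ring_nf
  rw [hcube, ← mul_pow, ← div_eq_mul_inv, le_div_iff₀ (by have := jap_pos ξ; positivity),
    inv_mul_le_iff₀ (by positivity), ← mul_pow]
  exact pow_le_pow_left₀ (jap_pos ξ).le (hjap.trans_eq (mul_comm _ _)) 3

theorem lagrangianWeight_div_freqBracket_le {β h : ℝ} (hβ : 0 < β) (hh : h ∈ Ioc 0 1) (x ξ : ℝ) :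
    lagrangianWeight h x ξ / freqBracket β h ξ ^ 3
      ≤ (1 + β⁻¹) ^ 3 * h ^ (-(3 * β)) * ((jap ξ ^ 3)⁻¹ * lagrangianWeight h x ξ) := by
  rw [div_eq_mul_inv, mul_comm, ← mul_assoc]
  exact mul_le_mul_of_nonneg_right (inv_freqBracket_pow_three_le hβ hh ξ)
    (inv_jap_nonneg _)

theorem lagrangianWeight_div_freqBracket_nonneg {β h : ℝ} (hβ : 0 ≤ β) (hh : 0 ≤ h) (x ξ : ℝ) :
    0 ≤ lagrangianWeight h x ξ / freqBracket β h ξ ^ 3 :=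
  div_nonneg (inv_jap_nonneg _)
    (pow_nonneg (freqBracket_pos hβ hh ξ).le 3)

theorem integrable_lagrangianWeight_div_freqBracket {β h : ℝ} (hβ : 0 < β) (hh : h ∈ Ioc 0 1)
    (x : ℝ) : Integrable fun ξ => lagrangianWeight h x ξ / freqBracket β h ξ ^ 3 := by
  have hmeas : Measurable fun ξ => lagrangianWeight h x ξ / freqBracket β h ξ ^ 3 := by
    unfold lagrangianWeight jap pprime freqBracket
    fun_prop
  refine ((integrable_inv_jap_pow_three_mul_comp_pprime
    (continuous_inv_jap_add_div x √h).continuousOn.integrableOn_Icc).const_mul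
      ((1 + β⁻¹) ^ 3 * h ^ (-(3 * β)))).mono' hmeas.aestronglyMeasurable
    (Eventually.of_forall fun ξ => ?_)
  rw [Real.norm_of_nonneg (lagrangianWeight_div_freqBracket_nonneg hβ.le hh.1.le x ξ)]
  exact lagrangianWeight_div_freqBracket_le hβ hh x ξ

theorem exists_integral_lagrangianWeight_div_freqBracket_le {β : ℝ} (hβ : 0 < β) :
    ∃ C : ℝ, ∀ h ∈ Ioc (0 : ℝ) 1, ∀ x,
      ∫ ξ, lagrangianWeight h x ξ / freqBracket β h ξ ^ 3 ≤ C * h ^ (1 / 2 - 4 * β) := by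
  obtain ⟨C, hC⟩ := exists_setIntegral_inv_jap_le (ε := 2 * β) (by positivity)
  refine ⟨(1 + β⁻¹) ^ 3 * C, fun h hh x => ?_⟩
  have hcont := (continuous_inv_jap_add_div x √h).continuousOn.integrableOn_Icc
    (a := -1) (b := 1) (μ := volume)
  have hpow : h ^ (-(3 * β)) * √h ^ (1 - 2 * β) = h ^ (1 / 2 - 4 * β) := by
    rw [sqrt_eq_rpow, ← rpow_mul hh.1.le, ← rpow_add hh.1]
    ring_nf
  calc ∫ ξ, lagrangianWeight h x ξ / freqBracket β h ξ ^ 3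
      ≤ ∫ ξ, (1 + β⁻¹) ^ 3 * h ^ (-(3 * β)) * ((jap ξ ^ 3)⁻¹ * lagrangianWeight h x ξ) :=
        integral_mono (integrable_lagrangianWeight_div_freqBracket hβ hh x)
          ((integrable_inv_jap_pow_three_mul_comp_pprime hcont).const_mul _)
          (lagrangianWeight_div_freqBracket_le hβ hh x)
    _ ≤ (1 + β⁻¹) ^ 3 * h ^ (-(3 * β)) * ∫ z in Icc (-1 : ℝ) 1, (jap ((x + z) / √h))⁻¹ := by
        have := rpow_nonneg hh.1.le (-(3 * β))
        rw [integral_const_mul]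
        gcongr
        exact integral_inv_jap_pow_three_mul_comp_pprime_le hcont
          fun z => inv_jap_nonneg _
    _ ≤ (1 + β⁻¹) ^ 3 * h ^ (-(3 * β)) * (C * √h ^ (1 - 2 * β)) := by
        have := rpow_nonneg hh.1.le (-(3 * β))
        gcongr
        exact hC _ ⟨sqrt_pos.2 hh.1, sqrt_le_one.2 hh.2⟩ x
    _ = (1 + β⁻¹) ^ 3 * C * h ^ (1 / 2 - 4 * β) := by
        rw [← hpow]
        ring

end LagrangianWeight

/-! ### The kernel of a Weyl operator -/

/-- The Schwartz kernel of `Op_h^w(b)`, without its normalizing factor `(2πh)⁻¹`. -/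
def weylKernel (h : ℝ) (b : 𝓢(ℝ × ℝ, ℂ)) (x y : ℝ) : ℂ :=
  ∫ ξ : ℝ, Complex.exp (I * (((x - y) * ξ / h : ℝ) : ℂ)) * b ((x + y) / 2, ξ)

section WeylKernel

variable {h : ℝ} (b : 𝓢(ℝ × ℝ, ℂ)) {v : ℝ → ℂ}

theorem integrable_symbol_snd (x : ℝ) : Integrable fun ξ => b (x, ξ) := by
  obtain ⟨C, hC⟩ := exists_norm_le_inv_one_add_sq b
  have hcont := b.continuous.comp (Continuous.prodMk_right x)
  refine (integrable_inv_one_add_sq.const_mul (C * (1 + x ^ 2)⁻¹)).mono'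
    hcont.aestronglyMeasurable (Eventually.of_forall fun ξ => ?_)
  simpa only [mul_assoc] using hC x ξ

theorem integrable_exp_mul_symbol_snd (h x y : ℝ) : Integrable fun ξ : ℝ =>
    Complex.exp (I * (((x - y) * ξ / h : ℝ) : ℂ)) * b ((x + y) / 2, ξ) := by
  refine (integrable_symbol_snd b _).bdd_mul (c := 1) (by fun_prop)
    (Eventually.of_forall fun ξ => (norm_exp_I_mul_ofReal _).le)

theorem norm_weylKernel_le (h x y : ℝ) : ‖weylKernel h b x y‖ ≤ ∫ ξ, ‖b ((x + y) / 2, ξ)‖ := by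
  refine (norm_integral_le_integral_norm _).trans_eq ?_
  simp only [norm_mul, norm_exp_I_mul_ofReal, one_mul]

theorem mul_weylKernel (h x y : ℝ) :
    I * (((x - y) / h : ℝ) : ℂ) * weylKernel h b x y = -weylKernel h (derivXi b) x y := by
  have hderiv : ∀ ξ : ℝ, HasDerivAt
      (fun ξ : ℝ => Complex.exp (I * (((x - y) * ξ / h : ℝ) : ℂ)) * b ((x + y) / 2, ξ))
      (I * (((x - y) / h : ℝ) : ℂ)
          * (Complex.exp (I * (((x - y) * ξ / h : ℝ) : ℂ)) * b ((x + y) / 2, ξ))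
        + Complex.exp (I * (((x - y) * ξ / h : ℝ) : ℂ)) * derivXi b ((x + y) / 2, ξ)) ξ := by
    intro ξ
    have hphase := (((hasDerivAt_id ξ).const_mul (x - y)).div_const h).ofReal_comp.const_mul I
    refine (hphase.cexp.mul (hasDerivAt_snd b _ ξ)).congr_deriv ?_
    simp only [mul_one, id_eq]
    ring
  have hint := integrable_exp_mul_symbol_snd b h x y
  have hint' := integrable_exp_mul_symbol_snd (derivXi b) h x y
  have hzero := integral_eq_zero_of_hasDerivAt_of_integrable hderiv
    ((hint.const_mul _).add hint') hint
  rw [integral_add (hint.const_mul _) hint', integral_const_mul] at hzero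
  exact eq_neg_of_add_eq_zero_left hzero

theorem norm_weylKernel_le_inv_jap (hh : 0 < h) (x y : ℝ) :
    ‖weylKernel h b x y‖ ≤ ((∫ ξ, ‖b ((x + y) / 2, ξ)‖)
        + √h * ∫ ξ, ‖derivXi b ((x + y) / 2, ξ)‖) * (jap ((x - y) / √h))⁻¹ := by
  have hsqrt : √h * √h = h := mul_self_sqrt hh.le
  have hpos : 0 < √h := sqrt_pos.2 hh
  have hparts : |(x - y) / √h| * ‖weylKernel h b x y‖ = √h * ‖weylKernel h (derivXi b) x y‖ := by
    have habs : |(x - y) / √h| = √h * |(x - y) / h| := by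
      rw [abs_div, abs_div, abs_of_pos hpos, abs_of_pos hh]
      field_simp
      rw [sq, hsqrt]
    rw [habs, ← norm_neg (weylKernel h (derivXi b) x y), ← mul_weylKernel, norm_mul, norm_mul,
      Complex.norm_I, one_mul, Complex.norm_real, Real.norm_eq_abs, mul_assoc]
  rw [← div_eq_mul_inv, le_div_iff₀ (jap_pos _), mul_comm]
  calc jap ((x - y) / √h) * ‖weylKernel h b x y‖
      ≤ (1 + |(x - y) / √h|) * ‖weylKernel h b x y‖ := by
        gcongr
        exact jap_le_one_add_abs _
    _ = ‖weylKernel h b x y‖ + √h * ‖weylKernel h (derivXi b) x y‖ := by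
        rw [add_mul, one_mul, hparts]
    _ ≤ _ := by
        gcongr
        exacts [norm_weylKernel_le b h x y, norm_weylKernel_le (derivXi b) h x y]

theorem weylOp_eq_integral_weylKernel (h : ℝ) (hv : Integrable v) (x : ℝ) :
    weylOp h b v x = ((2 * π * h : ℝ) : ℂ)⁻¹ * ∫ y, weylKernel h b x y * v y := by
  rw [weylOp_eq_integral b h hv, Measure.volume_eq_prod,
    integral_prod_symm _ (integrable_weylIntegrand b h hv x)]
  simp only [weylKernel, ← integral_mul_const]
  rfl

end WeylKernel

theorem integral_inv_jap_sq {s : ℝ} (hs : 0 < s) (x : ℝ) :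
    ∫ y, ((jap ((x - y) / s))⁻¹) ^ 2 = s * π := by
  have hjap : ∀ z, ((jap z)⁻¹) ^ 2 = (1 + z ^ 2)⁻¹ := fun z => by
    rw [inv_pow, jap, sq_sqrt (by positivity)]
  simp only [hjap]
  rw [integral_sub_left_eq_self (fun y => (1 + (y / s) ^ 2)⁻¹) volume x,
    Measure.integral_comp_div (fun z => (1 + z ^ 2)⁻¹), integral_univ_inv_one_add_sq,
    abs_of_pos hs, smul_eq_mul]

theorem memLp_inv_jap {s : ℝ} (hs : 0 < s) (x : ℝ) :
    MemLp (fun y => (jap ((x - y) / s))⁻¹) 2 := by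
  have hcont : Continuous fun y => (jap ((x - y) / s))⁻¹ :=
    (continuous_jap.comp (by fun_prop)).inv₀ fun _ => (jap_pos _).ne'
  rw [memLp_two_iff_integrable_sq hcont.aestronglyMeasurable]
  refine Integrable.of_integral_ne_zero ?_
  rw [integral_inv_jap_sq hs]
  positivity

theorem norm_integral_mul_le_of_norm_le_inv_jap {s A : ℝ} (hs : 0 < s) {x : ℝ} {k v : ℝ → ℂ}
    (hv : MemLp v 2) (hk : ∀ y, ‖k y‖ ≤ A * (jap ((x - y) / s))⁻¹) :
    ‖∫ y, k y * v y‖ ≤ A * √(s * π) * L2Norm v := by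
  have hA : 0 ≤ A := nonneg_of_mul_nonneg_left ((norm_nonneg _).trans (hk x))
    (inv_pos.2 (jap_pos _))
  have hjap := memLp_inv_jap hs x
  have hholder := integral_mul_le_Lp_mul_Lq_of_nonneg (μ := volume) Real.HolderConjugate.two_two
    (f := fun y => (jap ((x - y) / s))⁻¹) (g := fun y => ‖v y‖)
    (Eventually.of_forall fun y => inv_jap_nonneg _)
    (Eventually.of_forall fun y => norm_nonneg (v y)) (by simpa using hjap) (by simpa using hv.norm)
  simp only [rpow_two, integral_inv_jap_sq hs, ← sqrt_eq_rpow] at hholder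
  calc ‖∫ y, k y * v y‖ ≤ ∫ y, A * ((jap ((x - y) / s))⁻¹ * ‖v y‖) := by
        refine norm_integral_le_of_norm_le ((hjap.integrable_mul hv.norm).const_mul A)
          (Eventually.of_forall fun y => ?_)
        rw [norm_mul, ← mul_assoc]
        exact mul_le_mul_of_nonneg_right (hk y) (norm_nonneg _)
    _ ≤ A * (√(s * π) * L2Norm v) := by
        rw [integral_const_mul, L2Norm, ← sqrt_eq_rpow]
        gcongr
    _ = A * √(s * π) * L2Norm v := (mul_assoc _ _ _).symm

theorem L2Norm_nonneg (f : ℝ → ℂ) : 0 ≤ L2Norm f :=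
  rpow_nonneg (integral_nonneg fun _ => by positivity) _

theorem norm_weylOp_le {h B : ℝ} (hh : 0 < h) (b : 𝓢(ℝ × ℝ, ℂ))
    (hB : ∀ x, (∫ ξ, ‖b (x, ξ)‖) + √h * ∫ ξ, ‖derivXi b (x, ξ)‖ ≤ B) {v : ℝ → ℂ}
    (hv : Integrable v) (hv₂ : MemLp v 2) (x : ℝ) :
    ‖weylOp h b v x‖ ≤ B * h ^ (-(3 / 4) : ℝ) * L2Norm v := by
  have hB₀ : 0 ≤ B := le_trans (by positivity) (hB 0)
  have hL2 := L2Norm_nonneg v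
  have hkernel : ∀ y, ‖weylKernel h b x y‖ ≤ B * (jap ((x - y) / √h))⁻¹ := fun y =>
    (norm_weylKernel_le_inv_jap b hh x y).trans
      (mul_le_mul_of_nonneg_right (hB _) (inv_jap_nonneg _))
  have hpow : h⁻¹ * √√h = h ^ (-(3 / 4) : ℝ) := by
    rw [sqrt_eq_rpow, sqrt_eq_rpow, ← rpow_mul hh.le, ← rpow_neg_one, ← rpow_add hh]
    norm_num
  have hpi : √π ≤ 2 * π := by
    rw [sqrt_le_left (by positivity)]
    nlinarith [pi_gt_three]
  rw [weylOp_eq_integral_weylKernel b h hv, norm_mul, norm_inv, Complex.norm_real,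
    Real.norm_of_nonneg (by positivity)]
  calc (2 * π * h)⁻¹ * ‖∫ y, weylKernel h b x y * v y‖
      ≤ (2 * π * h)⁻¹ * (B * √(√h * π) * L2Norm v) := by
        gcongr
        exact norm_integral_mul_le_of_norm_le_inv_jap (sqrt_pos.2 hh) hv₂ hkernel
    _ = √π / (2 * π) * (B * (h⁻¹ * √√h) * L2Norm v) := by
        rw [sqrt_mul (sqrt_nonneg _)]
        field_simp
    _ ≤ B * h ^ (-(3 / 4) : ℝ) * L2Norm v := by
        rw [hpow]
        exact mul_le_of_le_one_left (by positivity) (div_le_one_of_le₀ hpi (by positivity))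

namespace IsSymbol

variable {ι : Type*} {β s : ℝ} {h : ι → ℝ} {b : ι → 𝓢(ℝ × ℝ, ℂ)}

theorem exists_integral_norm_derivXi_pow_le
    (hb : IsSymbol β s h (fun p => lagrangianWeight (h p.1) p.2.1 p.2.2) b) (hβ : 0 < β)
    (hh : ∀ i, h i ∈ Ioc 0 1) (n : ℕ) :
    ∃ C : ℝ, ∀ i x, √(h i) ^ n * ∫ ξ, ‖(derivXi ^ n) (b i) (x, ξ)‖
      ≤ C * h i ^ (1 / 2 - s - 4 * β) := by
  obtain ⟨C, hC₀, hC⟩ := (hb 0 n 3).exists_nonneg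
  obtain ⟨C', hC'⟩ := exists_integral_lagrangianWeight_div_freqBracket_le hβ
  refine ⟨C * C', fun i x => ?_⟩
  have hpos := (hh i).1
  have hpointwise : ∀ ξ, √(h i) ^ n * ‖(derivXi ^ n) (b i) (x, ξ)‖
      ≤ C * (h i ^ (-s) * (lagrangianWeight (h i) x ξ / freqBracket β (h i) ξ ^ 3)) := fun ξ => by
    have hbound := eventually_top.1 hC.bound (i, x, ξ)
    rwa [symbolWeight, norm_smul, pow_zero, one_mul, zero_add, Real.norm_of_nonneg (by positivity),
      Real.norm_of_nonneg (mul_nonneg (rpow_nonneg hpos.le _)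
        (lagrangianWeight_div_freqBracket_nonneg hβ.le hpos.le x ξ))] at hbound
  calc √(h i) ^ n * ∫ ξ, ‖(derivXi ^ n) (b i) (x, ξ)‖
      ≤ ∫ ξ, C * (h i ^ (-s) * (lagrangianWeight (h i) x ξ / freqBracket β (h i) ξ ^ 3)) := by
        rw [← integral_const_mul]
        exact integral_mono ((integrable_symbol_snd _ x).norm.const_mul _)
          (((integrable_lagrangianWeight_div_freqBracket hβ (hh i) x).const_mul _).const_mul _)
          hpointwise
    _ ≤ C * (h i ^ (-s) * (C' * h i ^ (1 / 2 - 4 * β))) := by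
        rw [integral_const_mul, integral_const_mul]
        gcongr
        exact hC' _ (hh i) x
    _ = C * C' * h i ^ (1 / 2 - s - 4 * β) := by
        rw [show 1 / 2 - s - 4 * β = -s + (1 / 2 - 4 * β) by ring, rpow_add hpos]
        ring

theorem exists_norm_weylOp_le
    (hb : IsSymbol β s h (fun p => lagrangianWeight (h p.1) p.2.1 p.2.2) b) (hβ : 0 < β)
    (hh : ∀ i, h i ∈ Ioc 0 1) :
    ∃ C : ℝ, ∀ i (v : ℝ → ℂ), Integrable v → MemLp v 2 → ∀ x,
      ‖weylOp (h i) (b i) v x‖ ≤ C * h i ^ (-(1 / 4) - s - 4 * β) * L2Norm v := by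
  obtain ⟨C₀, hC₀⟩ := hb.exists_integral_norm_derivXi_pow_le hβ hh 0
  obtain ⟨C₁, hC₁⟩ := hb.exists_integral_norm_derivXi_pow_le hβ hh 1
  refine ⟨C₀ + C₁, fun i v hv hv₂ x => ?_⟩
  have hsum : ∀ x, (∫ ξ, ‖b i (x, ξ)‖) + √(h i) * ∫ ξ, ‖derivXi (b i) (x, ξ)‖
      ≤ (C₀ + C₁) * h i ^ (1 / 2 - s - 4 * β) := fun x => by
    rw [add_mul]
    simpa using add_le_add (hC₀ i x) (hC₁ i x)
  have hpow : h i ^ (-(1 / 4) - s - 4 * β) = h i ^ (1 / 2 - s - 4 * β) * h i ^ (-(3 / 4) : ℝ) := by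
    rw [← rpow_add (hh i).1]
    ring_nf
  rw [hpow, ← mul_assoc (C₀ + C₁)]
  exact norm_weylOp_le (hh i).1 (b i) hsum hv hv₂ x

end IsSymbol

theorem IsSymbol.exists_norm_JBh_weylOp_le {ι : Type*} {β s : ℝ} {h : ι → ℝ}
    {b : ι → 𝓢(ℝ × ℝ, ℂ)}
    (hb : IsSymbol β s h (fun p => lagrangianWeight (h p.1) p.2.1 p.2.2) b) (hβ : 0 < β)
    (hh : ∀ i, h i ∈ Ioc 0 1) {ρ : ℝ} {m : ℕ} (hm : 1 / 2 < m - ρ / 2) :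
    ∃ C : ℝ, ∀ i (v : ℝ → ℂ), Integrable v → MemLp v 2 → ∀ x,
      ‖JBh (h i) ρ (weylOp (h i) (b i) v) x‖
        ≤ C * h i ^ (-(1 / 4) - s - (2 * m + 4) * β) * L2Norm v := by
  obtain ⟨C, hC⟩ := (hb.weylBracketSq_pow hβ hh m).exists_norm_weylOp_le hβ hh
  refine ⟨(∫ z, ‖FT (fun η => (bessel (m - ρ / 2) η : ℂ)) z‖) * C, fun i v hv hv₂ x => ?_⟩
  have hne : h i ≠ 0 := (hh i).1.ne'
  have horder : -(1 / 4) - s - (2 * m + 4) * β = -(1 / 4) - (s + 2 * m * β) - 4 * β := by ring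
  rw [horder, mul_assoc _ C, mul_assoc _ (C * _)]
  exact norm_JBh_le hm hne (integrable_weylOp _ _ hv)
    (FT_weylOp_weylBracketSq_pow (b i) hne hv m) (hC i v hv hv₂) x

theorem opW_continuity_L2_Winf_general (ρ : ℝ) {δ : ℝ} (hδ : δ ≤ 1 / 2) :
    ∃ K : ℝ, 0 < K ∧
      ∀ β : ℝ, 0 < β → ∀ Cc : ℕ → ℕ → ℕ → ℝ,
        ∃ C : ℝ, 0 < C ∧
          ∀ a : ℝ → ℝ → ℝ → ℂ, SchwartzFamily a →
            SymBound δ β (fun h x ξ => jap ((x + pprime ξ) / √h) ^ (-(1 : ℝ))) Cc a →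
            ∀ h ∈ Ioc (0 : ℝ) 1, ∀ v : ℝ → ℂ, Integrable v → MemLp v 2 →
              WhNorm h ρ (OpW h (a h) v) ≤ C * h ^ (-(1 / 4 : ℝ) - K * β) * L2Norm v := by
  have hm : 1 / 2 < ((⌈ρ / 2⌉₊ + 1 : ℕ) : ℝ) - ρ / 2 := by
    push_cast
    linarith [Nat.le_ceil (ρ / 2)]
  refine ⟨2 * (⌈ρ / 2⌉₊ + 1 : ℕ) + 4, by positivity, fun β hβ Cc => ?_⟩
  -- Indexing by all admissible pairs `(a, h)` makes the constant uniform in both.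
  let ι := {p : (ℝ → ℝ → ℝ → ℂ) × ℝ // SchwartzFamily p.1 ∧
    SymBound δ β (fun h x ξ => jap ((x + pprime ξ) / √h) ^ (-(1 : ℝ))) Cc p.1 ∧ p.2 ∈ Ioc 0 1}
  have hrepr : ∀ i : ι, ∃ b : 𝓢(ℝ × ℝ, ℂ), ∀ x ξ, b (x, ξ) = i.1.1 i.1.2 x ξ :=
    fun i => i.2.1 _ i.2.2.2
  choose b hb using hrepr
  have hsymbol := IsSymbol.of_symBound hδ hβ.le (fun i : ι => i.2.2.2) (fun i => i.2.2.1) hb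
  simp only [rpow_neg_one] at hsymbol
  obtain ⟨C, hC⟩ := hsymbol.exists_norm_JBh_weylOp_le hβ (fun i => i.2.2.2) hm
  refine ⟨|C| + 1, by positivity, fun a haS ha h hh v hv hv₂ => ciSup_le fun x => ?_⟩
  have hL2 := L2Norm_nonneg v
  have hrpow := rpow_nonneg hh.1.le (-(1 / 4) - (2 * (⌈ρ / 2⌉₊ + 1 : ℕ) + 4) * β)
  have ha_eq : (fun x ξ => b ⟨(a, h), haS, ha, hh⟩ (x, ξ)) = a h :=
    funext₂ (hb ⟨(a, h), haS, ha, hh⟩)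
  rw [← ha_eq]
  refine (hC ⟨(a, h), haS, ha, hh⟩ v hv hv₂ x).trans ?_
  rw [sub_zero]
  gcongr
  linarith [le_abs_self C]

/-- **Continuity from `L²` to `W^{ρ,∞}_h`** for Weyl operators with symbol in
`S_{δ,β}(⟨(x+p'(ξ))/√h⟩^{−1})`, `β > 0` : the operator norm is `O(h^{−1/4−σ})`, with
`σ > 0` depending linearly on `β`. -/
theorem opW_continuity_L2_Winf
    (ρ : ℕ) (δ : ℝ) (hδ : δ ∈ Set.Icc (0:ℝ) (1/2)) :
    ∃ K : ℝ, 0 < K ∧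
      ∀ β : ℝ, 0 < β → ∀ Cc : ℕ → ℕ → ℕ → ℝ,
        ∃ C : ℝ, 0 < C ∧
          ∀ a : ℝ → ℝ → ℝ → ℂ, SchwartzFamily a →
            SymBound δ β
              (fun h x ξ => jap ((x + pprime ξ) / Real.sqrt h) ^ (-(1:ℝ))) Cc a →
            ∀ h ∈ Set.Ioc (0:ℝ) 1, ∀ v : SchwartzMap ℝ ℂ,
              WhNorm h ρ (OpW h (a h) (fun x => v x)) ≤
                C * h ^ (-(1/4 : ℝ) - K * β) * L2Norm (fun x => v x) := by
  obtain ⟨K, hK, hgeneral⟩ := opW_continuity_L2_Winf_general ρ hδ.2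
  refine ⟨K, hK, fun β hβ Cc => ?_⟩
  obtain ⟨C, hC, hbound⟩ := hgeneral β hβ Cc
  exact ⟨C, hC, fun a haS ha h hh v => hbound a haS ha h hh v v.integrable (v.memLp 2)⟩

end
end

section
/- For every β > 0 and every integer N ≥ 2 there is a constant C > 0 such that for all h ∈ (0,1] and all X ∈ ℝ, ∫_ℝ (1 + (h^{β+1/2} ξ)²)^{−N} · (1 + (X + p'(h^{1/2} ξ))²/h)^{−1} dξ ≤ C² h^{−2βN}; equivalently, the L² norm in ξ of the function ξ ↦ ⟨h^β √h ξ⟩^{−N} ⟨(X + p'(√h ξ))/√h⟩^{−1} is at most C h^{−βN}, uniformly in X ∈ ℝ and h ∈ (0,1]. -/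
/-!
The rescaled phase `f ξ = (X + p'(√h ξ)) / √h` is increasing with derivative `(1 + h ξ²)^(-3/2)`,
so `(1 + h ξ²)^(-3/2) (1 + f²)⁻¹` is the derivative of `arctan ∘ f` and has integral at most `π`,
whatever `X` and `h` are. Since `h ^ β ≤ 1`, the weight `(1 + (h ^ β √h ξ)²)^(-N)` is at most
`h ^ (-2βN) (1 + h ξ²)^(-N)`, and `N ≥ 3/2` lets the last factor be replaced by `f'`.
-/

noncomputable section

open MeasureTheory

section ArctanPrimitive

variable {f f' w : ℝ → ℝ} {a b M : ℝ}

theorem integrable_of_hasDerivAt_of_nonneg_of_mem_Icc (hderiv : ∀ x, HasDerivAt f (f' x) x)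
    (hnonneg : ∀ x, 0 ≤ f' x) (hf : ∀ x, f x ∈ Set.Icc a b) : Integrable f' := by
  have hii (x y : ℝ) : IntervalIntegrable f' volume x y :=
    intervalIntegral.intervalIntegrable_deriv_of_nonneg
      (fun x _ ↦ (hderiv x).continuousAt.continuousWithinAt)
      (fun x _ ↦ hderiv x) (fun x _ ↦ hnonneg x)
  refine integrable_of_intervalIntegral_norm_bounded (b - a) (fun r : ℝ ↦ (hii (-r) r).1)
    Filter.tendsto_neg_atTop_atBot Filter.tendsto_id (.of_forall fun r ↦ ?_)
  calc ∫ x in (-r)..r, ‖f' x‖ = ∫ x in (-r)..r, f' x := by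
        simp only [Real.norm_of_nonneg (hnonneg _)]
    _ = f r - f (-r) :=
        intervalIntegral.integral_eq_sub_of_hasDerivAt (fun x _ ↦ hderiv x) (hii (-r) r)
    _ ≤ b - a := sub_le_sub (hf r).2 (hf (-r)).1

theorem integral_le_sub_of_hasDerivAt_of_mem_Icc (hderiv : ∀ x, HasDerivAt f (f' x) x)
    (hint : Integrable f') (hf : ∀ x, f x ∈ Set.Icc a b) : ∫ x, f' x ≤ b - a := by
  refine le_of_tendsto (intervalIntegral_tendsto_integral hint
    Filter.tendsto_neg_atTop_atBot Filter.tendsto_id) (.of_forall fun r ↦ ?_)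
  rw [intervalIntegral.integral_eq_sub_of_hasDerivAt (fun x _ ↦ hderiv x) hint.intervalIntegrable]
  exact sub_le_sub (hf _).2 (hf _).1

theorem arctan_mem_Icc (x : ℝ) : Real.arctan x ∈ Set.Icc (-(Real.pi / 2)) (Real.pi / 2) :=
  Set.Ioo_subset_Icc_self (Real.arctan_mem_Ioo x)

theorem hasDerivAt_arctan_comp (hderiv : ∀ x, HasDerivAt f (f' x) x) (x : ℝ) :
    HasDerivAt (fun x ↦ Real.arctan (f x)) (f' x * (1 + f x ^ 2)⁻¹) x := by
  simpa only [one_div, mul_comm] using (hderiv x).arctan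

theorem integrable_deriv_mul_inv_one_add_sq (hderiv : ∀ x, HasDerivAt f (f' x) x)
    (hnonneg : ∀ x, 0 ≤ f' x) : Integrable fun x ↦ f' x * (1 + f x ^ 2)⁻¹ :=
  integrable_of_hasDerivAt_of_nonneg_of_mem_Icc (hasDerivAt_arctan_comp hderiv)
    (fun x ↦ mul_nonneg (hnonneg x) (by positivity)) fun x ↦ arctan_mem_Icc (f x)

theorem integral_deriv_mul_inv_one_add_sq_le_pi (hderiv : ∀ x, HasDerivAt f (f' x) x)
    (hnonneg : ∀ x, 0 ≤ f' x) : ∫ x, f' x * (1 + f x ^ 2)⁻¹ ≤ Real.pi :=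
  calc ∫ x, f' x * (1 + f x ^ 2)⁻¹ ≤ Real.pi / 2 - -(Real.pi / 2) :=
        integral_le_sub_of_hasDerivAt_of_mem_Icc (hasDerivAt_arctan_comp hderiv)
          (integrable_deriv_mul_inv_one_add_sq hderiv hnonneg) fun x ↦ arctan_mem_Icc (f x)
    _ = Real.pi := by ring

theorem integrable_mul_inv_one_add_sq_of_le_mul_deriv (hderiv : ∀ x, HasDerivAt f (f' x) x)
    (hnonneg : ∀ x, 0 ≤ f' x) (hw : AEStronglyMeasurable w) (hw_nonneg : ∀ x, 0 ≤ w x)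
    (hw_le : ∀ x, w x ≤ M * f' x) : Integrable fun x ↦ w x * (1 + f x ^ 2)⁻¹ := by
  have hf : Continuous f := continuous_iff_continuousAt.2 fun x ↦ (hderiv x).continuousAt
  have hfactor : Continuous fun x ↦ (1 + f x ^ 2)⁻¹ :=
    (by fun_prop : Continuous fun x ↦ 1 + f x ^ 2).inv₀ fun x ↦ by positivity
  refine ((integrable_deriv_mul_inv_one_add_sq hderiv hnonneg).const_mul M).mono'
    (hw.mul hfactor.aestronglyMeasurable) (.of_forall fun x ↦ ?_)
  rw [Real.norm_of_nonneg (mul_nonneg (hw_nonneg x) (by positivity)), ← mul_assoc]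
  exact mul_le_mul_of_nonneg_right (hw_le x) (by positivity)

theorem integral_mul_inv_one_add_sq_le_of_le_mul_deriv (hderiv : ∀ x, HasDerivAt f (f' x) x)
    (hnonneg : ∀ x, 0 ≤ f' x) (hw_nonneg : ∀ x, 0 ≤ w x) (hM : 0 ≤ M)
    (hw_le : ∀ x, w x ≤ M * f' x) : ∫ x, w x * (1 + f x ^ 2)⁻¹ ≤ M * Real.pi :=
  calc ∫ x, w x * (1 + f x ^ 2)⁻¹ ≤ ∫ x, M * (f' x * (1 + f x ^ 2)⁻¹) := by
        refine integral_mono_of_nonneg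
          (.of_forall fun x ↦ mul_nonneg (hw_nonneg x) (by positivity))
          ((integrable_deriv_mul_inv_one_add_sq hderiv hnonneg).const_mul M)
          (.of_forall fun x ↦ ?_)
        simpa only [mul_assoc] using
          mul_le_mul_of_nonneg_right (hw_le x) (by positivity : 0 ≤ (1 + f x ^ 2)⁻¹)
    _ = M * ∫ x, f' x * (1 + f x ^ 2)⁻¹ := integral_const_mul _ _
    _ ≤ M * Real.pi :=
        mul_le_mul_of_nonneg_left (integral_deriv_mul_inv_one_add_sq_le_pi hderiv hnonneg) hM

end ArctanPrimitive

theorem hasDerivAt_pprime_s10 (ξ : ℝ) : HasDerivAt pprime ((1 + ξ ^ 2) ^ (-(3 / 2) : ℝ)) ξ := by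
  have hpos : 0 < 1 + ξ ^ 2 := by positivity
  have hsqrt : HasDerivAt (fun y : ℝ ↦ √(1 + y ^ 2)) (ξ / √(1 + ξ ^ 2)) ξ := by
    convert ((hasDerivAt_pow 2 ξ).const_add 1).sqrt hpos.ne' using 1
    field_simp
    ring
  have hcube : (1 + ξ ^ 2) ^ (-(3 / 2) : ℝ) = (√(1 + ξ ^ 2) ^ 3)⁻¹ := by
    rw [Real.rpow_neg hpos.le, Real.rpow_div_two_eq_sqrt _ hpos.le]
    norm_cast
  refine ((hasDerivAt_id ξ).div hsqrt (Real.sqrt_pos.2 hpos).ne').congr_deriv ?_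
  have hsq : √(1 + ξ ^ 2) ^ 2 = 1 + ξ ^ 2 := Real.sq_sqrt hpos.le
  rw [hcube]
  simp only [id]
  field_simp
  linarith

theorem hasDerivAt_add_pprime_mul_div (X : ℝ) {c : ℝ} (hc : c ≠ 0) (ξ : ℝ) :
    HasDerivAt (fun ξ ↦ (X + pprime (c * ξ)) / c) ((1 + (c * ξ) ^ 2) ^ (-(3 / 2) : ℝ)) ξ := by
  have hinner := (hasDerivAt_pprime_s10 (c * ξ)).comp ξ ((hasDerivAt_id ξ).const_mul c)
  refine ((hinner.const_add X).div_const c).congr_deriv ?_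
  rw [mul_one, mul_div_cancel_right₀ _ hc]

theorem one_add_mul_sq_rpow_neg_le {a s : ℝ} (ha : 0 < a) (ha' : a ≤ 1) (hs : 0 ≤ s) (t : ℝ) :
    (1 + (a * t) ^ 2) ^ (-s) ≤ a ^ (-(2 * s)) * (1 + t ^ 2) ^ (-s) :=
  calc (1 + (a * t) ^ 2) ^ (-s) ≤ (a ^ 2 * (1 + t ^ 2)) ^ (-s) := by
        refine Real.rpow_le_rpow_of_nonpos (by positivity) ?_ (neg_nonpos.2 hs)
        linarith [pow_le_one₀ ha.le ha' (n := 2)]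
    _ = a ^ (-(2 * s)) * (1 + t ^ 2) ^ (-s) := by
        rw [Real.mul_rpow (by positivity) (by positivity), ← Real.rpow_natCast_mul ha.le]
        simp

theorem one_add_rpow_mul_sq_rpow_neg_le {β s h : ℝ} (hβ : 0 ≤ β) (hs : 3 / 2 ≤ s)
    (hh : h ∈ Set.Ioc (0 : ℝ) 1) (ξ : ℝ) :
    (1 + (h ^ (β + 1 / 2) * ξ) ^ 2) ^ (-s) ≤
      h ^ (-(2 * β * s)) * (1 + (√h * ξ) ^ 2) ^ (-(3 / 2) : ℝ) :=
  calc (1 + (h ^ (β + 1 / 2) * ξ) ^ 2) ^ (-s) = (1 + (h ^ β * (√h * ξ)) ^ 2) ^ (-s) := by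
        rw [Real.rpow_add hh.1, Real.sqrt_eq_rpow, mul_assoc]
    _ ≤ (h ^ β) ^ (-(2 * s)) * (1 + (√h * ξ) ^ 2) ^ (-s) :=
        one_add_mul_sq_rpow_neg_le (Real.rpow_pos_of_pos hh.1 β)
          (Real.rpow_le_one hh.1.le hh.2 hβ) (by linarith) _
    _ = h ^ (-(2 * β * s)) * (1 + (√h * ξ) ^ 2) ^ (-s) := by
        rw [← Real.rpow_mul hh.1.le]
        ring_nf
    _ ≤ h ^ (-(2 * β * s)) * (1 + (√h * ξ) ^ 2) ^ (-(3 / 2) : ℝ) := by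
        have : 0 ≤ h := hh.1.le
        gcongr
        linarith [sq_nonneg (√h * ξ)]

theorem integral_estimate_near_Lambda_general {β s h : ℝ} (hβ : 0 ≤ β) (hs : 3 / 2 ≤ s)
    (hh : h ∈ Set.Ioc (0 : ℝ) 1) (X : ℝ) :
    Integrable (fun ξ : ℝ ↦ (1 + (h ^ (β + 1 / 2) * ξ) ^ 2) ^ (-s) *
        (1 + (X + pprime (√h * ξ)) ^ 2 / h)⁻¹) ∧
      ∫ ξ : ℝ, (1 + (h ^ (β + 1 / 2) * ξ) ^ 2) ^ (-s) *
        (1 + (X + pprime (√h * ξ)) ^ 2 / h)⁻¹ ≤ Real.pi * h ^ (-(2 * β * s)) := by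
  have h_pos : 0 < h := hh.1
  have hsq (ξ : ℝ) : (X + pprime (√h * ξ)) ^ 2 / h = ((X + pprime (√h * ξ)) / √h) ^ 2 := by
    rw [div_pow, Real.sq_sqrt h_pos.le]
  have hderiv := hasDerivAt_add_pprime_mul_div X (Real.sqrt_pos.2 h_pos).ne'
  have hnonneg (ξ : ℝ) : 0 ≤ (1 + (√h * ξ) ^ 2) ^ (-(3 / 2) : ℝ) := by positivity
  have hw_nonneg (ξ : ℝ) : 0 ≤ (1 + (h ^ (β + 1 / 2) * ξ) ^ 2) ^ (-s) := by positivity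
  have hw_le := one_add_rpow_mul_sq_rpow_neg_le hβ hs hh
  simp only [hsq]
  constructor
  · exact integrable_mul_inv_one_add_sq_of_le_mul_deriv hderiv hnonneg
      (Measurable.aestronglyMeasurable (by fun_prop)) hw_nonneg hw_le
  · rw [mul_comm Real.pi]
    exact integral_mul_inv_one_add_sq_le_of_le_mul_deriv hderiv hnonneg hw_nonneg
      (by positivity) hw_le

/-- **Key integral estimate** : for every `β > 0` and `N ≥ 2` there is `C > 0` with
`∫ (1+(h^{β+1/2}ξ)²)^{−N} (1+(X+p'(√h ξ))²/h)⁻¹ dξ ≤ C² h^{−2βN}`, uniformly in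
`X ∈ ℝ` and `h ∈ (0,1]`. -/
theorem integral_estimate_near_Lambda (β : ℝ) (hβ : 0 < β) (N : ℕ) (hN : 2 ≤ N) :
    ∃ C : ℝ, 0 < C ∧ ∀ h ∈ Set.Ioc (0:ℝ) 1, ∀ X : ℝ,
      (∫ ξ : ℝ, (1 + (h ^ (β + 1/2) * ξ)^2) ^ (-(N : ℝ)) *
          (1 + (X + pprime (Real.sqrt h * ξ))^2 / h)⁻¹) ≤
        C^2 * h ^ (-(2 * β * (N : ℝ))) := by
  have hN' : (3 / 2 : ℝ) ≤ N := by linarith [(Nat.ofNat_le_cast (α := ℝ)).2 hN]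
  refine ⟨√Real.pi, Real.sqrt_pos.2 Real.pi_pos, fun h hh X ↦ ?_⟩
  rw [Real.sq_sqrt Real.pi_pos.le]
  exact (integral_estimate_near_Lambda_general hβ.le hN' hh X).2

end
end
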